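/- arXiv:1603.03156 — 2 statements merged into one kernel-verified Lean document; each statement's English description precedes it below -/
import Mathlib

section
/- Let p be a prime and P a non-abelian finite p-group. Then P is a GC*-group if and only if Z(P) is cyclic and |P'| = p. -/
noncomputable section

/-- `χ : G → ℂ` is the character of some irreducible complex representation of `G`. -/
def IsIrrChar {G : Type*} [Group G] (χ : G → ℂ) : Prop :=
  ∃ (n : ℕ) (ρ : Representation ℂ G (Fin n → ℂ)),
    0 < n ∧
    (∀ U : Submodule ℂ (Fin n → ℂ), (∀ g : G, U.map (ρ g) ≤ U) → U = ⊥ ∨ U = ⊤) ∧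
    (∀ g : G, χ g = LinearMap.trace ℂ (Fin n → ℂ) (ρ g))

/-- Two complex characters are Galois conjugate: some field automorphism (which, on the
cyclotomic field generated by the character values, restricts to a Galois automorphism
over `ℚ`) carries the values of `χ` to those of `ψ`. -/
def GaloisConj {G : Type*} [Group G] (χ ψ : G → ℂ) : Prop :=
  ∃ σ : ℂ ≃+* ℂ, ∀ g : G, ψ g = σ (χ g)

/-- `G` is a `GC*`-group: any two non-linear irreducible complex characters of the same
degree are Galois conjugate. -/
def IsGCStar (G : Type*) [Group G] : Prop :=
  ∀ χ ψ : G → ℂ, IsIrrChar χ → IsIrrChar ψ → χ 1 ≠ 1 → ψ 1 ≠ 1 →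
    χ 1 = ψ 1 → GaloisConj χ ψ

open Polynomial
open scoped commutatorElement

/-! ### Automorphisms of `ℂ` -/

/-- An automorphism of a subfield of an algebraically closed field extends to the whole field. -/
theorem exists_ringEquiv_extends {K L : Type*} [Field K] [Field L] [Algebra K L] [IsAlgClosed L]
    (τ : K ≃+* K) : ∃ σ : L ≃+* L, ∀ x : K, σ (algebraMap K L x) = algebraMap K L (τ x) := by
  obtain ⟨s, hs⟩ := exists_isTranscendenceBasis K L
  have := IsAlgClosed.isAlgClosure_of_transcendence_basis _ hs
  let e : Algebra.adjoin K (Set.range ((↑) : s → L)) ≃+*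
      Algebra.adjoin K (Set.range ((↑) : s → L)) :=
    (hs.1.aevalEquiv.symm.toRingEquiv.trans (MvPolynomial.mapEquiv s τ)).trans
      hs.1.aevalEquiv.toRingEquiv
  refine ⟨IsAlgClosure.equivOfEquiv L L e, fun x => ?_⟩
  have he : e (algebraMap K _ x) = algebraMap K _ (τ x) := by
    have h1 : hs.1.aevalEquiv.symm (algebraMap K _ x) = MvPolynomial.C x :=
      hs.1.aevalEquiv.symm.commutes x
    have h2 : hs.1.aevalEquiv (MvPolynomial.C (τ x)) = algebraMap K _ (τ x) :=
      hs.1.aevalEquiv.commutes (τ x)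
    change hs.1.aevalEquiv (MvPolynomial.mapEquiv s τ (hs.1.aevalEquiv.symm (algebraMap K _ x))) = _
    rw [h1, MvPolynomial.mapEquiv_apply, MvPolynomial.map_C]
    exact h2
  have := IsAlgClosure.equivOfEquiv_algebraMap L L e (algebraMap K _ x)
  rw [he] at this
  exact this

/-- Primitive complex roots of unity of the same order are conjugate under field automorphisms. -/
theorem exists_ringEquiv_primitiveRoot {n : ℕ} [NeZero n] {ζ ξ : ℂ} (hζ : IsPrimitiveRoot ζ n)
    (hξ : IsPrimitiveRoot ξ n) : ∃ σ : ℂ ≃+* ℂ, σ ζ = ξ := by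
  have : NeZero (n : ℚ) := ⟨Nat.cast_ne_zero.2 (NeZero.ne n)⟩
  obtain ⟨K, _, _, _⟩ : ∃ (K : Type) (_ : Field K) (_ : Algebra ℚ K),
      IsCyclotomicExtension {n} ℚ K :=
    ⟨CyclotomicField n ℚ, _, _, CyclotomicField.isCyclotomicExtension n ℚ⟩
  have := IsCyclotomicExtension.finiteDimensional {n} ℚ K
  let μ : K := IsCyclotomicExtension.zeta n ℚ K
  have hμ : IsPrimitiveRoot μ n := IsCyclotomicExtension.zeta_spec n ℚ K
  have hirr : Irreducible (cyclotomic n ℚ) := cyclotomic.irreducible_rat (NeZero.pos n)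
  let φ : K →+* ℂ := (IsAlgClosed.lift : K →ₐ[ℚ] ℂ).toRingHom
  let : Algebra K ℂ := φ.toAlgebra
  have hφ : IsPrimitiveRoot (algebraMap K ℂ μ) n := hμ.map_of_injective φ.injective
  have key : ∀ ω : ℂ, IsPrimitiveRoot ω n → ∃ σ : ℂ ≃+* ℂ, σ (algebraMap K ℂ μ) = ω := by
    intro ω hω
    obtain ⟨i, -, hi, rfl⟩ := (hφ.isPrimitiveRoot_iff).1 hω
    obtain ⟨σ, hσ⟩ := exists_ringEquiv_extends (L := ℂ)
      (IsCyclotomicExtension.fromZetaAut (hμ.pow_of_coprime i hi) hirr).toRingEquiv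
    refine ⟨σ, ?_⟩
    rw [hσ]
    have := IsCyclotomicExtension.fromZetaAut_spec (hμ.pow_of_coprime i hi) hirr
    change algebraMap K ℂ (IsCyclotomicExtension.fromZetaAut (hμ.pow_of_coprime i hi) hirr μ) = _
    rw [this, map_pow]
  obtain ⟨σ₁, h₁⟩ := key ζ hζ
  obtain ⟨σ₂, h₂⟩ := key ξ hξ
  exact ⟨σ₁.symm.trans σ₂, by simp [← h₁, ← h₂]⟩

/-! ### Irreducible representations -/

/-- A representation without proper non-zero invariant subspaces. -/
def IsIrrRep {G : Type*} [Group G] {n : ℕ} (ρ : Representation ℂ G (Fin n → ℂ)) : Prop :=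
  ∀ U : Submodule ℂ (Fin n → ℂ), (∀ g : G, U.map (ρ g) ≤ U) → U = ⊥ ∨ U = ⊤

section Rep

variable {G : Type*} [Group G] {n : ℕ} {ρ : Representation ℂ G (Fin n → ℂ)}

/-- **Schur's lemma**. -/
theorem IsIrrRep.exists_eq_smul_one (hρ : IsIrrRep ρ) (hn : 0 < n)
    {T : Module.End ℂ (Fin n → ℂ)} (hT : ∀ g, Commute T (ρ g)) : ∃ c : ℂ, T = c • 1 := by
  have : NeZero n := ⟨hn.ne'⟩
  obtain ⟨c, hc⟩ := Module.End.exists_eigenvalue T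
  refine ⟨c, ?_⟩
  have h := hρ (Module.End.eigenspace T c) (by
    rintro g _ ⟨v, hv, rfl⟩
    have hv' : T v = c • v := Module.End.mem_eigenspace_iff.1 hv
    rw [Module.End.mem_eigenspace_iff]
    have h1 : T (ρ g v) = ρ g (T v) := LinearMap.congr_fun (hT g) v
    rw [h1, hv', map_smul])
  rcases h with h | h
  · exact absurd h hc
  · ext1 v
    apply LinearMap.ext fun x => ?_
    have : Pi.single v x ∈ Module.End.eigenspace T c := h ▸ Submodule.mem_top
    simpa using Module.End.mem_eigenspace_iff.1 this

theorem IsIrrRep.exists_eq_smul_one_of_mem_center (hρ : IsIrrRep ρ) (hn : 0 < n) {z : G}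
    (hz : z ∈ Subgroup.center G) : ∃ c : ℂ, ρ z = c • 1 :=
  hρ.exists_eq_smul_one hn fun g => by
    rw [Commute, SemiconjBy, ← map_mul, ← map_mul, Subgroup.mem_center_iff.1 hz g]

/-- An irreducible representation whose kernel contains the commutator subgroup has degree one. -/
theorem IsIrrRep.degree_eq_one (hρ : IsIrrRep ρ) (hn : 0 < n)
    (h : ∀ g ∈ commutator G, ρ g = 1) : n = 1 := by
  have : NeZero n := ⟨hn.ne'⟩
  have hs : ∀ g, ∃ c : ℂ, ρ g = c • 1 := fun g => hρ.exists_eq_smul_one hn fun k => by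
    have h1 : ρ ⁅g, k⁆ = 1 :=
      h _ (Subgroup.commutator_mem_commutator (Subgroup.mem_top g) (Subgroup.mem_top k))
    have h2 : g * k = ⁅g, k⁆ * (k * g) := by simp [commutatorElement_def]
    rw [Commute, SemiconjBy, ← map_mul, h2, map_mul, h1, one_mul, map_mul]
  let v : Fin n → ℂ := Pi.single 0 1
  have hv : v ≠ 0 := by simp [v]
  rcases hρ (ℂ ∙ v) (by
    intro g
    obtain ⟨c, hc⟩ := hs g
    rw [Submodule.map_span_le]
    rintro _ rfl
    rw [hc]
    exact Submodule.smul_mem _ _ (Submodule.mem_span_singleton_self _)) with h | h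
  · exact absurd (Submodule.span_singleton_eq_bot.1 h) hv
  · have h1 := finrank_span_singleton (K := ℂ) hv
    rw [h, finrank_top] at h1
    simpa using h1

theorem map_eq_one_of_degree_eq_one (ρ : Representation ℂ G (Fin 1 → ℂ)) {g : G}
    (hg : g ∈ commutator G) : ρ g = 1 := by
  have hs : ∀ A B : Module.End ℂ (Fin 1 → ℂ), A * B = B * A := by
    intro A B
    apply (LinearMap.toMatrix' (R := ℂ) (m := Fin 1) (n := Fin 1)).injective
    rw [LinearMap.toMatrix'_mul, LinearMap.toMatrix'_mul]
    ext i j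
    simp [Matrix.mul_apply, Subsingleton.elim i 0, Subsingleton.elim j 0, mul_comm]
  have hle : commutator G ≤ ρ.toHomUnits.ker := by
    rw [commutator_def, Subgroup.commutator_le]
    intro a _ b _
    rw [MonoidHom.mem_ker, map_commutatorElement, commutatorElement_eq_one_iff_mul_comm]
    exact Units.ext (hs _ _)
  have := hle hg
  rw [MonoidHom.mem_ker] at this
  simpa using congrArg Units.val this

theorem trace_eq_zero_of_commutator {g h : G} {c : ℂ} (hc : ρ ⁅g, h⁆ = c • 1) (hc1 : c ≠ 1) :
    LinearMap.trace ℂ (Fin n → ℂ) (ρ g) = 0 := by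
  have h2 : h * g * h⁻¹ = ⁅g, h⁆⁻¹ * g := by simp [commutatorElement_def, mul_assoc]
  have h3 : g = ⁅g, h⁆ * (h * g * h⁻¹) := by rw [h2, mul_inv_cancel_left]
  have h4 : LinearMap.trace ℂ (Fin n → ℂ) (ρ (h * g * h⁻¹)) =
      LinearMap.trace ℂ (Fin n → ℂ) (ρ g) := by
    rw [map_mul, LinearMap.trace_mul_comm, ← map_mul]; simp
  have h5 : LinearMap.trace ℂ (Fin n → ℂ) (ρ g) = c * LinearMap.trace ℂ (Fin n → ℂ) (ρ g) := by
    conv_lhs => rw [h3, map_mul, hc, smul_mul_assoc, one_mul, map_smul, h4, smul_eq_mul]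
  have : (1 - c) * LinearMap.trace ℂ (Fin n → ℂ) (ρ g) = 0 := by linear_combination h5
  exact (mul_eq_zero.1 this).resolve_left (sub_ne_zero.2 hc1.symm)

theorem trace_one_eq : LinearMap.trace ℂ (Fin n → ℂ) (ρ 1) = n := by
  simp

theorem IsIrrRep.isIrrChar (hρ : IsIrrRep ρ) (hn : 0 < n) :
    IsIrrChar fun g => LinearMap.trace ℂ (Fin n → ℂ) (ρ g) :=
  ⟨n, ρ, hn, hρ, fun _ => rfl⟩

/-- The twist of an irreducible character by a linear one is irreducible. -/
theorem IsIrrChar.mul_hom {χ : G → ℂ} (hχ : IsIrrChar χ) (α : G →* ℂˣ) :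
    IsIrrChar fun g => (α g : ℂ) * χ g := by
  obtain ⟨n, ρ, hn, hρ, h⟩ := hχ
  let ρ' : Representation ℂ G (Fin n → ℂ) :=
    { toFun := fun g => (α g : ℂ) • ρ g
      map_one' := by simp
      map_mul' := fun a b => by rw [map_mul, map_mul, Units.val_mul, smul_mul_smul_comm] }
  refine ⟨n, ρ', hn, fun U hU => hρ U fun g => ?_, fun g => ?_⟩
  · rintro _ ⟨v, hv, rfl⟩
    have h1 : (α g : ℂ) • ρ g v ∈ U := hU g ⟨v, hv, rfl⟩
    exact (U.smul_mem_iff (α g).ne_zero).1 h1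
  · simp [ρ', h]

/-- Irreducible characters inflate along surjective homomorphisms. -/
theorem IsIrrChar.comp {H : Type*} [Group H] {χ : H → ℂ} (hχ : IsIrrChar χ) {f : G →* H}
    (hf : Function.Surjective f) : IsIrrChar fun g => χ (f g) := by
  obtain ⟨n, ρ, hn, hρ, h⟩ := hχ
  refine ⟨n, ρ.comp f, hn, fun U hU => hρ U fun k => ?_, fun g => h _⟩
  obtain ⟨g, rfl⟩ := hf k
  exact hU g

theorem IsGCStar.of_surjective {H : Type*} [Group H] (hG : IsGCStar G) {f : G →* H}
    (hf : Function.Surjective f) : IsGCStar H := by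
  intro χ ψ hχ hψ h1 h2 h3
  obtain ⟨σ, hσ⟩ := hG _ _ (hχ.comp hf) (hψ.comp hf) (by simpa) (by simpa) (by simpa)
  refine ⟨σ, fun k => ?_⟩
  obtain ⟨g, rfl⟩ := hf k
  exact hσ g

end Rep

/-! ### Wedderburn decomposition of the group algebra -/

theorem trace_mulLeft_pi_matrix {k : ℕ} {d : Fin k → ℕ}
    (x : ∀ i, Matrix (Fin (d i)) (Fin (d i)) ℂ) :
    LinearMap.trace ℂ _ (LinearMap.mulLeft ℂ x) = ∑ i, (d i : ℂ) * (x i).trace := by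
  let b := Pi.basis fun i => Matrix.stdBasis ℂ (Fin (d i)) (Fin (d i))
  rw [LinearMap.trace_eq_matrix_trace ℂ b, Matrix.trace, Fintype.sum_sigma]
  refine Finset.sum_congr rfl fun i _ => ?_
  rw [Fintype.sum_prod_type, Matrix.trace, Finset.mul_sum]
  refine Finset.sum_congr rfl fun r _ => ?_
  have : ∀ s, (LinearMap.toMatrix b b (LinearMap.mulLeft ℂ x)).diag ⟨i, (r, s)⟩ = x i r r := by
    intro s
    rw [Matrix.diag_apply, LinearMap.toMatrix_apply]
    simp only [b, Pi.basis_repr, Pi.basis_apply, LinearMap.mulLeft_apply, Pi.mul_apply,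
      Pi.single_eq_same, Matrix.stdBasis_eq_single]
    change (x i * Matrix.single r s 1 : Matrix _ _ ℂ) r s = _
    simp
  rw [Finset.sum_congr rfl fun s _ => this s]
  simp

theorem trace_mulLeft_monoidAlgebra {G : Type*} [Group G] [Fintype G] (a : MonoidAlgebra ℂ G) :
    LinearMap.trace ℂ _ (LinearMap.mulLeft ℂ a) = Fintype.card G * a.coeff 1 := by
  classical
  rw [LinearMap.trace_eq_matrix_trace ℂ (MonoidAlgebra.basis G ℂ), Matrix.trace]
  have : ∀ g, (LinearMap.toMatrix (MonoidAlgebra.basis G ℂ) (MonoidAlgebra.basis G ℂ)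
      (LinearMap.mulLeft ℂ a)).diag g = a.coeff 1 := by
    intro g
    rw [Matrix.diag_apply, LinearMap.toMatrix_apply, LinearMap.mulLeft_apply,
      MonoidAlgebra.basis_apply]
    change (a * MonoidAlgebra.single g 1).coeff g = _
    simp
  rw [Finset.sum_congr rfl fun s _ => this s]
  simp

/-- A finite group has a family of representations, with pairwise distinct characters, whose
images span the full endomorphism algebras and which satisfy the orthogonality relations. -/
theorem exists_irreducible_decomposition (G : Type*) [Group G] [Fintype G] [DecidableEq G] :
    ∃ (k : ℕ) (d : Fin k → ℕ) (ρ : ∀ i, Representation ℂ G (Fin (d i) → ℂ)),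
      (∀ i, 0 < d i) ∧ (∀ i, Submodule.span ℂ (Set.range (ρ i)) = ⊤) ∧
      (Function.Injective fun i g => LinearMap.trace ℂ (Fin (d i) → ℂ) (ρ i g)) ∧
      (∀ i, (d i : ℂ) • ∑ g, LinearMap.trace ℂ (Fin (d i) → ℂ) (ρ i g⁻¹) • ρ i g =
        (Fintype.card G : ℂ) • 1) ∧
      (∀ g, ∑ i, (d i : ℂ) * LinearMap.trace ℂ (Fin (d i) → ℂ) (ρ i g) =
        if g = 1 then (Fintype.card G : ℂ) else 0) := by
  have : FiniteDimensional ℂ (MonoidAlgebra ℂ G) :=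
    Module.Finite.of_basis (MonoidAlgebra.basis G ℂ)
  obtain ⟨k, d, hd, ⟨e⟩⟩ :=
    IsSemisimpleRing.exists_algEquiv_pi_matrix_of_isAlgClosed ℂ (MonoidAlgebra ℂ G)
  let F : ∀ i, MonoidAlgebra ℂ G →ₐ[ℂ] Module.End ℂ (Fin (d i) → ℂ) := fun i =>
    (Matrix.toLinAlgEquiv' : Matrix (Fin (d i)) (Fin (d i)) ℂ ≃ₐ[ℂ] _).toAlgHom.comp
      ((Pi.evalAlgHom ℂ (fun i => Matrix (Fin (d i)) (Fin (d i)) ℂ) i).comp e.toAlgHom)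
  have hF : ∀ i x, F i x = Matrix.toLin' (e x i) := fun i x => rfl
  have hsurj : ∀ i, Function.Surjective (F i) := by
    intro i T
    refine ⟨e.symm (Pi.single i (LinearMap.toMatrix' T)), ?_⟩
    rw [hF, AlgEquiv.apply_symm_apply, Pi.single_eq_same, Matrix.toLin'_toMatrix']
  have hdec : ∀ x : MonoidAlgebra ℂ G, x = ∑ g, x.coeff g • MonoidAlgebra.of ℂ G g := by
    intro x
    exact ((MonoidAlgebra.basis G ℂ).sum_repr x).symm
  have htr : ∀ x : MonoidAlgebra ℂ G, ∑ i, (d i : ℂ) * LinearMap.trace ℂ _ (F i x) =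
      Fintype.card G * x.coeff 1 := by
    intro x
    rw [← trace_mulLeft_monoidAlgebra, ← LinearMap.trace_conj' _ e.toLinearEquiv]
    have : e.toLinearEquiv.conj (LinearMap.mulLeft ℂ x) = LinearMap.mulLeft ℂ (e x) := by
      refine LinearMap.ext fun y => ?_
      simp [LinearEquiv.conj_apply]
    rw [this, trace_mulLeft_pi_matrix]
    exact Finset.sum_congr rfl fun i _ => by rw [hF, Matrix.trace_toLin'_eq]
  let ρ : ∀ i, Representation ℂ G (Fin (d i) → ℂ) := fun i =>
    ((F i : MonoidAlgebra ℂ G →* _)).comp (MonoidAlgebra.of ℂ G)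
  have hρ : ∀ i g, ρ i g = F i (MonoidAlgebra.of ℂ G g) := fun i g => rfl
  have hFρ : ∀ i x, F i x = ∑ g, x.coeff g • ρ i g := by
    intro i x
    conv_lhs => rw [hdec x]
    simp only [map_sum, map_smul, hρ]
  have hblock : ∀ i j, F j (e.symm (Pi.single i 1)) = if i = j then 1 else 0 := by
    intro i j
    rw [hF, AlgEquiv.apply_symm_apply]
    split_ifs with h
    · subst h
      rw [Pi.single_eq_same, Matrix.toLin'_one]; rfl
    · rw [Pi.single_eq_of_ne (Ne.symm h), map_zero]
  refine ⟨k, d, ρ, fun i => Nat.pos_of_ne_zero (hd i).out, fun i => ?_, fun i j hij => ?_,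
    fun i => ?_, fun g => ?_⟩
  · rw [eq_top_iff]
    rintro T -
    obtain ⟨x, rfl⟩ := hsurj i T
    rw [hFρ]
    exact Submodule.sum_mem _ fun g _ => Submodule.smul_mem _ _ (Submodule.subset_span ⟨g, rfl⟩)
  · by_contra hne
    have h1 : ∀ x, LinearMap.trace ℂ _ (F i x) = LinearMap.trace ℂ _ (F j x) := by
      intro x
      simp only [hFρ, map_sum, map_smul]
      exact Finset.sum_congr rfl fun g _ => congrArg _ (congrFun hij g)
    have h2 := h1 (e.symm (Pi.single i 1))
    rw [hblock, hblock, if_pos rfl, if_neg hne, map_zero, LinearMap.trace_one] at h2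
    exact (hd i).out (by simpa using h2)
  · have hc : ∀ g, (Fintype.card G : ℂ) * (e.symm (Pi.single i 1)).coeff g =
        d i * LinearMap.trace ℂ (Fin (d i) → ℂ) (ρ i g⁻¹) := by
      intro g
      have h1 := htr (e.symm (Pi.single i 1) * MonoidAlgebra.of ℂ G g⁻¹)
      rw [Finset.sum_eq_single i] at h1
      · rw [map_mul, hblock, if_pos rfl, one_mul] at h1
        rw [hρ, h1]
        simp
      · intro j _ hj
        rw [map_mul, hblock, if_neg hj.symm, zero_mul, map_zero, mul_zero]
      · simp
    have h1 := hFρ i (e.symm (Pi.single i 1))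
    rw [hblock, if_pos rfl] at h1
    rw [h1, Finset.smul_sum, Finset.smul_sum]
    exact Finset.sum_congr rfl fun g _ => by rw [smul_smul, smul_smul, hc]
  · have h1 := htr (MonoidAlgebra.of ℂ G g)
    simp only [← hρ] at h1
    rw [h1]
    simp [Finsupp.single_apply]

theorem isIrrRep_of_span_eq_top {G : Type*} [Group G] {n : ℕ}
    {ρ : Representation ℂ G (Fin n → ℂ)} (h : Submodule.span ℂ (Set.range ρ) = ⊤) :
    IsIrrRep ρ := by
  intro U hU
  by_cases hbot : U = ⊥
  · exact Or.inl hbot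
  right
  obtain ⟨u, hu, hu0⟩ := U.ne_bot_iff.1 hbot
  have hall : ∀ T : Module.End ℂ (Fin n → ℂ), T u ∈ U := by
    intro T
    have hT : T ∈ Submodule.span ℂ (Set.range ρ) := h ▸ Submodule.mem_top
    induction hT using Submodule.span_induction with
    | mem x hx => obtain ⟨g, rfl⟩ := hx; exact hU g ⟨u, hu, rfl⟩
    | zero => simp
    | add x y _ _ hx hy => exact U.add_mem hx hy
    | smul c x _ hx => exact U.smul_mem c hx
  rw [eq_top_iff]
  rintro v -
  obtain ⟨f, hf⟩ := Module.Projective.exists_dual_ne_zero ℂ hu0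
  have := hall (f.smulRight ((f u)⁻¹ • v))
  rwa [LinearMap.smulRight_apply, smul_smul, mul_inv_cancel₀ hf, one_smul] at this


/-! ### Character values and degrees -/

section Values

variable {G : Type*} [Group G] {n : ℕ} {ρ : Representation ℂ G (Fin n → ℂ)}

/-- Character values at elements of order dividing `m` are integer polynomials in a primitive
`m`-th root of unity. -/
theorem exists_trace_eq_aeval {m : ℕ} [NeZero m] {ζ : ℂ} (hζ : IsPrimitiveRoot ζ m) {g : G}
    (hg : g ^ m = 1) : ∃ f : ℤ[X], LinearMap.trace ℂ (Fin n → ℂ) (ρ g) = aeval ζ f := by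
  suffices h : LinearMap.trace ℂ (Fin n → ℂ) (ρ g) ∈ Algebra.adjoin ℤ {ζ} by
    rw [Algebra.adjoin_singleton_eq_range_aeval] at h
    obtain ⟨f, hf⟩ := h
    exact ⟨f, hf.symm⟩
  rw [Module.End.trace_eq_sum_roots_charpoly_of_splits (IsAlgClosed.splits _)]
  refine multiset_sum_mem _ fun μ hμ => ?_
  have hev : Module.End.HasEigenvalue (ρ g) μ :=
    (Module.End.hasEigenvalue_iff_isRoot_charpoly _ _).2 (isRoot_of_mem_roots hμ)
  obtain ⟨v, hv⟩ := hev.exists_hasEigenvector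
  have h1 := hv.pow_apply m
  rw [← map_pow, hg, map_one, Module.End.one_apply] at h1
  have h2 : μ ^ m = 1 := by
    have : (μ ^ m - 1) • v = 0 := by rw [sub_smul, ← h1, one_smul, sub_self]
    exact sub_eq_zero.1 ((smul_eq_zero.1 this).resolve_right hv.2)
  obtain ⟨i, -, rfl⟩ := hζ.eq_pow_of_pow_eq_one h2
  exact pow_mem (Algebra.self_mem_adjoin_singleton ℤ ζ) i

theorem isIntegral_trace [Finite G] (g : G) :
    IsIntegral ℤ (LinearMap.trace ℂ (Fin n → ℂ) (ρ g)) := by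
  have : NeZero (Nat.card G) := ⟨Nat.card_pos.ne'⟩
  obtain ⟨ζ, hζ⟩ : ∃ ζ : ℂ, IsPrimitiveRoot ζ (Nat.card G) :=
    ⟨_, Complex.isPrimitiveRoot_exp (Nat.card G) (NeZero.ne _)⟩
  obtain ⟨f, hf⟩ := exists_trace_eq_aeval (ρ := ρ) hζ (pow_card_eq_one' (x := g))
  have h : aeval ζ f ∈ integralClosure ℤ ℂ := by
    rw [aeval_eq_sum_range]
    exact sum_mem fun i _ => Subalgebra.smul_mem _ (pow_mem (hζ.isIntegral Nat.card_pos) i) _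
  rwa [hf]

/-- The degree of an irreducible representation divides the order of the group. -/
theorem degree_dvd_card [Fintype G] (hn : 0 < n)
    (h : (n : ℂ) • ∑ g, LinearMap.trace ℂ (Fin n → ℂ) (ρ g⁻¹) • ρ g = (Fintype.card G : ℂ) • 1) :
    n ∣ Fintype.card G := by
  have : NeZero n := ⟨hn.ne'⟩
  have hn0 : (n : ℂ) ≠ 0 := Nat.cast_ne_zero.2 hn.ne'
  let O := integralClosure ℤ ℂ
  let N : Submodule O (Module.End ℂ (Fin n → ℂ)) := Submodule.span O (Set.range ρ)
  have hx : IsIntegral O ((Fintype.card G : ℂ) / n) := by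
    refine isIntegral_of_smul_mem_submodule N ?_ (Submodule.fg_span (Set.finite_range ρ)) _ ?_
    · intro hN
      have : ρ 1 ∈ N := Submodule.subset_span ⟨1, rfl⟩
      rw [hN, Submodule.mem_bot, map_one] at this
      exact one_ne_zero this
    · have hsc : ((Fintype.card G : ℂ) / n) • (1 : Module.End ℂ (Fin n → ℂ)) =
          ∑ g, LinearMap.trace ℂ (Fin n → ℂ) (ρ g⁻¹) • ρ g := by
        rw [div_eq_inv_mul, mul_smul, ← h, smul_smul, inv_mul_cancel₀ hn0, one_smul]
      intro T hT
      induction hT using Submodule.span_induction with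
      | mem x hx =>
        obtain ⟨k, rfl⟩ := hx
        rw [← one_mul (ρ k), ← smul_mul_assoc, hsc, Finset.sum_mul]
        refine Submodule.sum_mem _ fun g _ => ?_
        rw [smul_mul_assoc, ← map_mul]
        exact N.smul_mem (⟨_, isIntegral_trace g⁻¹⟩ : O) (Submodule.subset_span ⟨g * k, rfl⟩)
      | zero => rw [smul_zero]; exact N.zero_mem
      | add x y _ _ hx hy => rw [smul_add]; exact N.add_mem hx hy
      | smul c x _ hx => rw [smul_comm]; exact N.smul_mem c hx
  have hz : IsIntegral ℤ ((Fintype.card G : ℂ) / n) := isIntegral_trans _ hx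
  have hq : IsIntegral ℤ ((Fintype.card G : ℚ) / n) := by
    rw [← isIntegral_algebraMap_iff (algebraMap ℚ ℂ).injective (B := ℂ)]
    simpa using hz
  obtain ⟨y, hy⟩ := IsIntegrallyClosed.isIntegral_iff.1 hq
  have hnq : (n : ℚ) ≠ 0 := Nat.cast_ne_zero.2 hn.ne'
  rw [eq_div_iff hnq, eq_intCast] at hy
  have : (n : ℤ) ∣ (Fintype.card G : ℤ) := ⟨y, by
    have : (y * n : ℤ) = (Fintype.card G : ℤ) := by exact_mod_cast hy
    rw [← this, mul_comm]⟩
  exact_mod_cast this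

theorem degree_sq_le_index_center [Finite G] (hn : 0 < n)
    (h : Submodule.span ℂ (Set.range ρ) = ⊤) : n ^ 2 ≤ (Subgroup.center G).index := by
  have hρ := isIrrRep_of_span_eq_top h
  have : Fintype (G ⧸ Subgroup.center G) := Fintype.ofFinite _
  let f : G ⧸ Subgroup.center G → Module.End ℂ (Fin n → ℂ) := fun q => ρ q.out
  have hf : Submodule.span ℂ (Set.range f) = ⊤ := by
    rw [eq_top_iff, ← h, Submodule.span_le]
    rintro _ ⟨g, rfl⟩
    obtain ⟨z, hz⟩ := QuotientGroup.mk_out_eq_mul (Subgroup.center G) g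
    obtain ⟨c, hc⟩ := hρ.exists_eq_smul_one_of_mem_center hn (inv_mem z.2)
    have h1 : g = (g : G ⧸ Subgroup.center G).out * (z : G)⁻¹ := by rw [hz, mul_inv_cancel_right]
    have h2 : ρ g = c • f g := by
      conv_lhs => rw [h1, map_mul, hc, mul_smul_comm, mul_one]
    rw [SetLike.mem_coe, h2]
    exact Submodule.smul_mem _ _ (Submodule.subset_span ⟨_, rfl⟩)
  have h1 := finrank_range_le_card (R := ℂ) f
  rw [Set.finrank, hf, finrank_top, Module.finrank_linearMap] at h1
  rw [Subgroup.index, Nat.card_eq_fintype_card, sq]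
  simpa using h1

/-- If the commutator subgroup has prime order, a non-linear irreducible representation is faithful
on it. -/
theorem IsIrrRep.map_ne_one_of_mem_commutator (hρ : IsIrrRep ρ) (hn : 0 < n) (hn1 : n ≠ 1)
    {p : ℕ} (hp : p.Prime) (hcard : Nat.card (commutator G) = p) {z : G}
    (hz : z ∈ commutator G) (hz1 : z ≠ 1) : ρ z ≠ 1 := by
  intro h
  have : Fact p.Prime := ⟨hp⟩
  refine hn1 (hρ.degree_eq_one hn fun g hg => ?_)
  obtain ⟨i, hi⟩ := Subgroup.mem_zpowers_iff.1 (mem_zpowers_of_prime_card hcard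
    (g := (⟨z, hz⟩ : commutator G)) (g' := ⟨g, hg⟩) (by simpa [Subtype.ext_iff] using hz1))
  have hi' : z ^ i = g := by simpa [Subtype.ext_iff] using hi
  have h1 : ρ.toHomUnits z = 1 := Units.ext (by simpa using h)
  have h2 : ρ.toHomUnits g = 1 := by rw [← hi', map_zpow, h1, one_zpow]
  simpa using congrArg Units.val h2

theorem IsIrrRep.trace_eq_zero_of_notMem_center (hρ : IsIrrRep ρ) (hn : 0 < n) (hn1 : n ≠ 1)
    {p : ℕ} (hp : p.Prime) (hcard : Nat.card (commutator G) = p)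
    (hle : commutator G ≤ Subgroup.center G) {g : G} (hg : g ∉ Subgroup.center G) :
    LinearMap.trace ℂ (Fin n → ℂ) (ρ g) = 0 := by
  rw [Subgroup.mem_center_iff, not_forall] at hg
  obtain ⟨k, hk⟩ := hg
  have hmem : ⁅g, k⁆ ∈ commutator G :=
    Subgroup.commutator_mem_commutator (Subgroup.mem_top g) (Subgroup.mem_top k)
  have hne : ⁅g, k⁆ ≠ 1 := fun h => hk (commutatorElement_eq_one_iff_mul_comm.1 h).symm
  obtain ⟨c, hc⟩ := hρ.exists_eq_smul_one_of_mem_center hn (hle hmem)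
  refine trace_eq_zero_of_commutator hc fun h => ?_
  rw [h, one_smul] at hc
  exact hρ.map_ne_one_of_mem_commutator hn hn1 hp hcard hmem hne hc

/-- A non-linear irreducible representation of a group whose commutator subgroup is central of
prime order is fully ramified over the center. -/
theorem IsIrrRep.degree_sq_mul_card_center [Fintype G] (hρ : IsIrrRep ρ) (hn : 0 < n) (hn1 : n ≠ 1)
    (h : (n : ℂ) • ∑ g, LinearMap.trace ℂ (Fin n → ℂ) (ρ g⁻¹) • ρ g = (Fintype.card G : ℂ) • 1)
    {p : ℕ} (hp : p.Prime) (hcard : Nat.card (commutator G) = p)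
    (hle : commutator G ≤ Subgroup.center G) :
    n ^ 2 * Nat.card (Subgroup.center G) = Nat.card G := by
  classical
  have hn0 : (n : ℂ) ≠ 0 := Nat.cast_ne_zero.2 hn.ne'
  have htr := congrArg (LinearMap.trace ℂ (Fin n → ℂ)) h
  simp only [map_smul, map_sum, smul_eq_mul, LinearMap.trace_one, Module.finrank_fin_fun] at htr
  rw [mul_comm, mul_left_inj' hn0] at htr
  have hval : ∀ g : G, LinearMap.trace ℂ (Fin n → ℂ) (ρ g⁻¹) * LinearMap.trace ℂ (Fin n → ℂ) (ρ g)
      = if g ∈ Subgroup.center G then (n : ℂ) ^ 2 else 0 := by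
    intro g
    split_ifs with hg
    · obtain ⟨c, hc⟩ := hρ.exists_eq_smul_one_of_mem_center hn hg
      obtain ⟨c', hc'⟩ := hρ.exists_eq_smul_one_of_mem_center hn (inv_mem hg)
      have h1 : ρ g⁻¹ * ρ g = 1 := by rw [← map_mul, inv_mul_cancel, map_one]
      rw [hc, hc', smul_mul_smul_comm, one_mul] at h1
      have h2 := congrArg (LinearMap.trace ℂ (Fin n → ℂ)) h1
      simp only [map_smul, smul_eq_mul, LinearMap.trace_one, Module.finrank_fin_fun] at h2
      simp only [hc, hc', map_smul, smul_eq_mul, LinearMap.trace_one, Module.finrank_fin_fun]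
      linear_combination (n : ℂ) * h2
    · rw [hρ.trace_eq_zero_of_notMem_center hn hn1 hp hcard hle hg, mul_zero]
  rw [Finset.sum_congr rfl fun g _ => hval g, ← Finset.sum_filter, Finset.sum_const, nsmul_eq_mul,
    ← Fintype.card_subtype] at htr
  rw [Nat.card_eq_fintype_card, Nat.card_eq_fintype_card, mul_comm]
  exact_mod_cast htr

end Values

/-- A non-abelian finite group has a non-linear irreducible representation. -/
theorem exists_nonlinear_irreducible (G : Type*) [Group G] [Fintype G]
    (h : ¬ ∀ a b : G, a * b = b * a) :
    ∃ (n : ℕ) (ρ : Representation ℂ G (Fin n → ℂ)), 0 < n ∧ n ≠ 1 ∧ IsIrrRep ρ ∧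
      (n : ℂ) • ∑ g, LinearMap.trace ℂ (Fin n → ℂ) (ρ g⁻¹) • ρ g = (Fintype.card G : ℂ) • 1 := by
  classical
  obtain ⟨k, d, ρ, hpos, hspan, -, horth, hreg⟩ := exists_irreducible_decomposition G
  by_contra hcon
  have hd : ∀ i, d i = 1 := fun i => by
    by_contra h1
    exact hcon ⟨d i, ρ i, hpos i, h1, isIrrRep_of_span_eq_top (hspan i), horth i⟩
  refine h fun a b => ?_
  rw [← commutatorElement_eq_one_iff_mul_comm]
  by_contra hne
  have hmem : ⁅a, b⁆ ∈ commutator G :=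
    Subgroup.commutator_mem_commutator (Subgroup.mem_top a) (Subgroup.mem_top b)
  have h1 := hreg ⁅a, b⁆
  have h2 := hreg 1
  rw [if_neg hne] at h1
  rw [if_pos rfl] at h2
  have h3 : ∀ i, ρ i ⁅a, b⁆ = ρ i 1 := by
    intro i
    rw [map_one]
    generalize ρ i = r
    revert r
    rw [hd i]
    exact fun r => map_eq_one_of_degree_eq_one r hmem
  simp only [h3] at h1
  exact Fintype.card_ne_zero (α := G) (by exact_mod_cast h2.symm.trans h1)


/-! ### Finite `p`-groups -/

section PGroup

variable {G : Type*} [Group G] [Finite G] {p : ℕ}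

/-- A non-trivial normal subgroup of a finite `p`-group contains a central element of order `p`. -/
theorem IsPGroup.exists_orderOf_eq_prime_mem_center (hG : IsPGroup p G) (hp : p.Prime)
    (N : Subgroup G) [N.Normal] (hN : N ≠ ⊥) :
    ∃ z ∈ N, z ∈ Subgroup.center G ∧ orderOf z = p := by
  have : Fact p.Prime := ⟨hp⟩
  have hdvd : p ∣ Nat.card N := by
    rcases (hG.to_subgroup N).card_eq_or_dvd with h | h
    · exact absurd (Subgroup.card_eq_one.1 h) hN
    · exact h
  obtain ⟨y, hy, hy1⟩ :=
    (hG.of_equiv ConjAct.toConjAct).exists_fixed_point_of_prime_dvd_card_of_fixed_point N hdvd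
      (a := 1) (fun g => smul_one g)
  have hyc : (y : G) ∈ Subgroup.center G := by
    rw [Subgroup.mem_center_iff]
    intro g
    have h := congrArg Subtype.val (hy (ConjAct.toConjAct g))
    rw [ConjAct.Subgroup.val_conj_smul, ConjAct.toConjAct_smul] at h
    rwa [mul_inv_eq_iff_eq_mul] at h
  have hy1' : (y : G) ≠ 1 := fun h => hy1 (Subtype.ext h.symm)
  have hpy : p ∣ orderOf (y : G) := by
    obtain ⟨k, hk⟩ := (IsPGroup.iff_orderOf.1 hG) y
    rw [hk]
    exact dvd_pow_self p fun h => hy1' (orderOf_eq_one_iff.1 (by rw [hk, h, pow_zero]))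
  refine ⟨(y : G) ^ (orderOf (y : G) / p), pow_mem y.2 _, pow_mem hyc _, ?_⟩
  exact orderOf_pow_orderOf_div (orderOf_pos _).ne' hpy

/-- A normal subgroup of order `p` of a finite `p`-group is central. -/
theorem IsPGroup.le_center_of_card_eq_prime (hG : IsPGroup p G) (hp : p.Prime)
    (N : Subgroup G) [N.Normal] (hN : Nat.card N = p) : N ≤ Subgroup.center G := by
  have : Fact p.Prime := ⟨hp⟩
  obtain ⟨z, hzN, hzc, hz⟩ := hG.exists_orderOf_eq_prime_mem_center hp N fun h =>
    hp.ne_one (by rw [← hN, h, Subgroup.card_bot])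
  have hz1 : z ≠ 1 := fun h => hp.ne_one (by rw [← hz, h, orderOf_one])
  intro g hg
  obtain ⟨i, hi⟩ := Subgroup.mem_zpowers_iff.1 (mem_zpowers_of_prime_card hN
    (g := (⟨z, hzN⟩ : N)) (g' := ⟨g, hg⟩) (by simpa [Subtype.ext_iff] using hz1))
  have hi' : z ^ i = g := by simpa [Subtype.ext_iff] using hi
  exact hi' ▸ zpow_mem hzc i

end PGroup

theorem IsCyclic.mem_of_pow_card_eq_one {C : Type*} [Group C] [Finite C] [IsCyclic C]
    {H : Subgroup C} {x : C} (hx : x ^ Nat.card H = 1) : x ∈ H := by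
  classical
  have : Fintype C := Fintype.ofFinite C
  have hsub : (Finset.univ.filter fun a => a ∈ H) ⊆
      Finset.univ.filter fun a : C => a ^ Nat.card H = 1 := fun a ha => by
    have h := pow_card_eq_one' (x := (⟨a, (Finset.mem_filter.1 ha).2⟩ : H))
    exact Finset.mem_filter.2 ⟨Finset.mem_univ a, congrArg Subtype.val h⟩
  have hcard : Nat.card H = (Finset.univ.filter fun a => a ∈ H).card := by
    rw [Nat.card_eq_fintype_card, ← Fintype.card_subtype]
  have heq := Finset.eq_of_subset_of_card_le hsub
    ((IsCyclic.card_pow_eq_one_le Nat.card_pos).trans hcard.le)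
  have h : x ∈ Finset.univ.filter fun a => a ∈ H := heq ▸ by simpa using hx
  simpa using h

section CentralCharacter

variable {G : Type*} [Group G] {n : ℕ} {ρ : Representation ℂ G (Fin n → ℂ)}

/-- The central character of an irreducible representation. -/
theorem IsIrrRep.exists_centralCharacter (hρ : IsIrrRep ρ) (hn : 0 < n) :
    ∃ l : Subgroup.center G →* ℂ, ∀ z : Subgroup.center G, ρ z = l z • 1 := by
  have : NeZero n := ⟨hn.ne'⟩
  choose l hl using fun z : Subgroup.center G => hρ.exists_eq_smul_one_of_mem_center hn z.2
  have hinj : Function.Injective fun c : ℂ => c • (1 : Module.End ℂ (Fin n → ℂ)) :=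
    fun a b h => smul_left_injective ℂ (one_ne_zero (α := Module.End ℂ (Fin n → ℂ))) h
  refine ⟨⟨⟨l, hinj ?_⟩, fun x y => hinj ?_⟩, hl⟩
  · simp only [← hl, OneMemClass.coe_one, map_one, one_smul]
  · simp only [← hl, Subgroup.coe_mul, map_mul]
    rw [hl, hl, smul_mul_smul_comm, one_mul]

/-- If the center is cyclic and the commutator subgroup is central of order `p`, non-linear
irreducible characters are faithful on the center. -/
theorem IsIrrRep.centralCharacter_injective [Finite G] (hρ : IsIrrRep ρ) (hn : 0 < n)
    (hn1 : n ≠ 1) {p : ℕ} (hp : p.Prime) (hG : IsPGroup p G) (hcard : Nat.card (commutator G) = p)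
    (hle : commutator G ≤ Subgroup.center G) (hcyc : IsCyclic (Subgroup.center G))
    {l : Subgroup.center G →* ℂ} (hl : ∀ z : Subgroup.center G, ρ z = l z • 1) :
    Function.Injective l := by
  have : Fact p.Prime := ⟨hp⟩
  have : NeZero n := ⟨hn.ne'⟩
  rw [← MonoidHom.ker_eq_bot_iff]
  by_contra hker
  obtain ⟨z, hzK, -, hz⟩ :=
    (hG.to_subgroup (Subgroup.center G)).exists_orderOf_eq_prime_mem_center hp l.ker hker
  have hC : Nat.card ((commutator G).subgroupOf (Subgroup.center G)) = p := by
    rw [← hcard]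
    exact Nat.card_congr (Subgroup.subgroupOfEquivOfLe hle).toEquiv
  have hzp : z ∈ (commutator G).subgroupOf (Subgroup.center G) :=
    IsCyclic.mem_of_pow_card_eq_one (by rw [hC, ← hz, pow_orderOf_eq_one])
  rw [Subgroup.mem_subgroupOf] at hzp
  refine hρ.map_ne_one_of_mem_commutator hn hn1 hp hcard hzp (fun h => hp.ne_one ?_) ?_
  · rw [← hz, orderOf_eq_one_iff]
    exact Subtype.ext h
  · rw [hl, MonoidHom.mem_ker.1 hzK, one_smul]

end CentralCharacter

/-- A `p`-group with cyclic center and commutator subgroup of order `p` is a `GC*`-group. -/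
theorem IsPGroup.isGCStar {G : Type*} [Group G] [Finite G] {p : ℕ} (hp : p.Prime)
    (hG : IsPGroup p G) (hcyc : IsCyclic (Subgroup.center G))
    (hcard : Nat.card (commutator G) = p) : IsGCStar G := by
  have hle := hG.le_center_of_card_eq_prime hp (commutator G) hcard
  rintro χ ψ ⟨n, ρ, hn, hρ, hχ⟩ ⟨m, τ, hm, hτ, hψ⟩ hχ1 hψ1 hdeg
  replace hρ : IsIrrRep ρ := hρ
  replace hτ : IsIrrRep τ := hτ
  rw [hχ, trace_one_eq] at hχ1 hdeg
  rw [hψ, trace_one_eq] at hψ1 hdeg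
  obtain rfl : n = m := by exact_mod_cast hdeg
  have hn1 : n ≠ 1 := by exact_mod_cast hχ1
  obtain ⟨l, hl⟩ := hρ.exists_centralCharacter hn
  obtain ⟨k, hk⟩ := hτ.exists_centralCharacter hn
  obtain ⟨z, hz⟩ := IsCyclic.exists_monoid_generator (α := Subgroup.center G)
  have hlz := IsPrimitiveRoot.orderOf (l z)
  have hkz := IsPrimitiveRoot.orderOf (k z)
  rw [orderOf_injective l
    (hρ.centralCharacter_injective hn hn1 hp hG hcard hle hcyc hl)] at hlz
  rw [orderOf_injective k
    (hτ.centralCharacter_injective hn hn1 hp hG hcard hle hcyc hk)] at hkz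
  have : NeZero (orderOf z) := ⟨(orderOf_pos z).ne'⟩
  obtain ⟨σ, hσ⟩ := exists_ringEquiv_primitiveRoot hlz hkz
  refine ⟨σ, fun g => ?_⟩
  rw [hχ, hψ]
  by_cases hg : g ∈ Subgroup.center G
  · obtain ⟨i, hi⟩ := Submonoid.mem_powers_iff _ _ |>.1 (hz ⟨g, hg⟩)
    have h1 := hl ⟨g, hg⟩
    have h2 := hk ⟨g, hg⟩
    rw [← hi, map_pow] at h1 h2
    simp only [hi] at h1 h2
    rw [h1, h2]
    simp [hσ]
  · rw [hρ.trace_eq_zero_of_notMem_center hn hn1 hp hcard hle hg,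
      hτ.trace_eq_zero_of_notMem_center hn hn1 hp hcard hle hg, map_zero]

/-! ### `GC*`-groups -/

section GCStar

variable {G : Type*} [Group G]

/-- In a `GC*`-group the kernel of a non-linear irreducible representation lies in the commutator
subgroup. -/
theorem IsGCStar.mem_commutator_of_map_eq_one [Finite G] (hG : IsGCStar G) {n : ℕ}
    {ρ : Representation ℂ G (Fin n → ℂ)} (hρ : IsIrrRep ρ) (hn : 0 < n) (hn1 : n ≠ 1) {a : G}
    (ha : ρ a = 1) : a ∈ commutator G := by
  by_contra hmem
  have hne : Abelianization.of a ≠ 1 := fun h => hmem ((Abelianization.ker_of G).le h)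
  have : Finite (Abelianization G) := Quotient.finite _
  have : NeZero (Monoid.exponent (Abelianization G)) := ⟨Monoid.exponent_ne_zero_of_finite⟩
  obtain ⟨β, hβ⟩ := CommGroup.exists_apply_ne_one_of_hasEnoughRootsOfUnity
    (Abelianization G) ℂ hne
  have hχ := hρ.isIrrChar hn
  have hn1' : (n : ℂ) ≠ 1 := by exact_mod_cast hn1
  have hn0 : (n : ℂ) ≠ 0 := Nat.cast_ne_zero.2 hn.ne'
  obtain ⟨σ, hσ⟩ := hG _ _ hχ (hχ.mul_hom (β.comp Abelianization.of))
    (by rwa [trace_one_eq]) (by rw [map_one, trace_one_eq]; simpa using hn1') (by simp)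
  have h := hσ a
  simp only [ha, ← map_one ρ] at h
  rw [trace_one_eq, map_natCast] at h
  refine hβ (Units.ext (mul_right_cancel₀ hn0 (h.trans (one_mul _).symm)))

theorem IsGCStar.isCyclic_center [Finite G] (hG : IsGCStar G) {p : ℕ} (hp : p.Prime)
    (hcard : Nat.card (commutator G) = p) : IsCyclic (Subgroup.center G) := by
  have : Fintype G := Fintype.ofFinite G
  obtain ⟨n, ρ, hn, hn1, hρ, -⟩ := exists_nonlinear_irreducible G fun h => by
    refine hp.ne_one (hcard.symm.trans ?_)
    rw [Subgroup.card_eq_one, commutator_def, Subgroup.commutator_eq_bot_iff_le_centralizer]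
    intro a _ b _
    exact h b a
  obtain ⟨l, hl⟩ := hρ.exists_centralCharacter hn
  refine isCyclic_of_injective_ringHom l ((MonoidHom.ker_eq_bot_iff l).1 ?_)
  rw [eq_bot_iff]
  intro z hz
  have h1 : ρ z = 1 := by rw [hl, MonoidHom.mem_ker.1 hz, one_smul]
  rw [Subgroup.mem_bot]
  by_contra hz1
  exact hρ.map_ne_one_of_mem_commutator hn hn1 hp hcard
    (hG.mem_commutator_of_map_eq_one hρ hn hn1 h1) (fun h => hz1 (Subtype.ext h)) h1

/-- In a `GC*`-group of exponent dividing `m` there are at most `φ m` non-linear irreducible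
characters of a given degree. -/
theorem IsGCStar.card_le_totient (hG : IsGCStar G) {m : ℕ} [NeZero m] (hm : ∀ g : G, g ^ m = 1)
    {ι : Type*} {χ : ι → G → ℂ} (hinj : Function.Injective χ) (hχ : ∀ i, IsIrrChar (χ i))
    {d : ℂ} (hd : d ≠ 1) (s : Finset ι) (hs : ∀ i ∈ s, χ i 1 = d) : s.card ≤ m.totient := by
  classical
  rcases s.eq_empty_or_nonempty with rfl | ⟨j, hj⟩
  · simp
  obtain ⟨ζ, hζ⟩ : ∃ ζ : ℂ, IsPrimitiveRoot ζ m :=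
    ⟨_, Complex.isPrimitiveRoot_exp m (NeZero.ne m)⟩
  have hconj : ∀ i ∈ s, GaloisConj (χ j) (χ i) := fun i hi =>
    hG _ _ (hχ j) (hχ i) (by rwa [hs j hj]) (by rwa [hs i hi]) (by rw [hs j hj, hs i hi])
  choose! σ hσ using hconj
  have hval : ∀ g, ∃ f : ℤ[X], χ j g = aeval ζ f := fun g => by
    obtain ⟨n, ρ, -, -, h⟩ := hχ j
    obtain ⟨f, hf⟩ := exists_trace_eq_aeval (ρ := ρ) hζ (hm g)
    exact ⟨f, (h g).trans hf⟩
  rw [← Complex.card_primitiveRoots m]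
  refine Finset.card_le_card_of_injOn (fun i => σ i ζ) (fun i _ => ?_) fun a ha b hb hab => ?_
  · exact (mem_primitiveRoots (NeZero.pos m)).2 (hζ.map_of_injective (σ i).injective)
  · refine hinj (funext fun g => ?_)
    obtain ⟨f, hf⟩ := hval g
    have hmap : ∀ τ : ℂ ≃+* ℂ, τ (aeval ζ f) = aeval (τ ζ) f := fun τ =>
      (aeval_algHom_apply (τ : ℂ →+* ℂ).toIntAlgHom ζ f).symm
    rw [hσ a ha, hσ b hb, hf, hmap, hmap]
    exact congrArg (fun x => aeval x f) hab

end GCStar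

/-- The degrees of the irreducible representations whose kernel does not contain a given central
subgroup. -/
theorem sum_degree_sq_of_not_le_ker {G : Type*} [Group G] [Fintype G] [DecidableEq G] {k : ℕ}
    {d : Fin k → ℕ} {ρ : ∀ i, Representation ℂ G (Fin (d i) → ℂ)} (hpos : ∀ i, 0 < d i)
    (hρ : ∀ i, IsIrrRep (ρ i))
    (hreg : ∀ g, ∑ i, (d i : ℂ) * LinearMap.trace ℂ (Fin (d i) → ℂ) (ρ i g) =
      if g = 1 then (Fintype.card G : ℂ) else 0)
    {N : Subgroup G} (hN : N ≤ Subgroup.center G) (I : Finset (Fin k))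
    (hI : ∀ i, i ∈ I ↔ ∃ z ∈ N, ρ i z ≠ 1) :
    Nat.card N * ∑ i ∈ I, d i ^ 2 + Nat.card G = Nat.card N * Nat.card G := by
  classical
  have hone := hreg 1
  simp only [trace_one_eq, if_pos, ← sq] at hone
  have hsum : ∑ z : N, ∑ i, (d i : ℂ) * LinearMap.trace ℂ (Fin (d i) → ℂ) (ρ i z) =
      Fintype.card G := by
    simp [hreg]
  have hinner : ∀ i, ∑ z : N, (d i : ℂ) * LinearMap.trace ℂ (Fin (d i) → ℂ) (ρ i z) =
      if i ∈ I then 0 else (Nat.card N : ℂ) * (d i : ℂ) ^ 2 := by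
    intro i
    split_ifs with hi
    · obtain ⟨z, hz, hne⟩ := (hI i).1 hi
      obtain ⟨c, hc⟩ := (hρ i).exists_eq_smul_one_of_mem_center (hpos i) (hN hz)
      have h1 : ρ i z * ∑ y : N, ρ i y = ∑ y : N, ρ i y := by
        rw [Finset.mul_sum]
        refine Fintype.sum_equiv (Equiv.mulLeft (⟨z, hz⟩ : N)) _ _ fun y => ?_
        simp
      rw [hc, smul_mul_assoc, one_mul] at h1
      have h2 := congrArg (LinearMap.trace ℂ (Fin (d i) → ℂ)) h1
      rw [map_smul, smul_eq_mul, map_sum] at h2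
      have h3 : c - 1 ≠ 0 := fun h => hne (by rw [hc, sub_eq_zero.1 h, one_smul])
      rw [← Finset.mul_sum, mul_left_cancel₀ h3 (by linear_combination h2 :
        (c - 1) * ∑ y : N, LinearMap.trace ℂ (Fin (d i) → ℂ) (ρ i y) = (c - 1) * 0), mul_zero]
    · have h1 : ∀ z : N, ρ i z = ρ i 1 := fun z => by
        rw [map_one]
        by_contra h
        exact hi ((hI i).2 ⟨z, z.2, h⟩)
      simp only [h1, trace_one_eq, Finset.sum_const, Finset.card_univ, nsmul_eq_mul]
      rw [Nat.card_eq_fintype_card, sq]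
  rw [Finset.sum_comm, Finset.sum_congr rfl fun i _ => hinner i] at hsum
  have hsplit : (Nat.card N : ℂ) * ∑ i ∈ I, (d i : ℂ) ^ 2 +
      ∑ i, (if i ∈ I then 0 else (Nat.card N : ℂ) * (d i : ℂ) ^ 2) =
        Nat.card N * ∑ i, (d i : ℂ) ^ 2 := by
    have h : ∑ i ∈ I, (d i : ℂ) ^ 2 = ∑ i, if i ∈ I then (d i : ℂ) ^ 2 else 0 := by
      rw [Finset.sum_ite_mem, Finset.univ_inter]
    rw [h, Finset.mul_sum, Finset.mul_sum, ← Finset.sum_add_distrib]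
    refine Finset.sum_congr rfl fun i _ => ?_
    split_ifs <;> simp
  rw [hsum, hone] at hsplit
  rw [← Nat.card_eq_fintype_card] at hsplit
  exact_mod_cast hsplit

/-! ### Central extensions of order `p` -/

section Extension

variable {G : Type*} [Group G]

theorem pow_commute_of_commutator_mem_center {g x : G} (hc : ⁅g, x⁆ ∈ Subgroup.center G) {m : ℕ}
    (hm : ⁅g, x⁆ ^ m = 1) : Commute (g ^ m) x := by
  have h1 : x * g⁻¹ * x⁻¹ = g⁻¹ * ⁅g, x⁆ := by
    rw [commutatorElement_def]
    group
  have h2 := congrArg (· ^ m) h1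
  have hcomm : Commute g⁻¹ ⁅g, x⁆ := Subgroup.mem_center_iff.1 hc g⁻¹
  simp only [conj_pow, hcomm.mul_pow, hm, mul_one, inv_pow] at h2
  rw [mul_inv_eq_iff_eq_mul] at h2
  exact (Commute.inv_left_iff.1 h2.symm)

theorem pow_mem_center_of_card_commutator {p : ℕ} (hcard : Nat.card (commutator G) = p)
    (hle : commutator G ≤ Subgroup.center G) (g : G) : g ^ p ∈ Subgroup.center G := by
  rw [Subgroup.mem_center_iff]
  intro x
  have hmem : ⁅g, x⁆ ∈ commutator G :=
    Subgroup.commutator_mem_commutator (Subgroup.mem_top g) (Subgroup.mem_top x)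
  have h := pow_card_eq_one' (x := (⟨_, hmem⟩ : commutator G))
  rw [hcard] at h
  exact (pow_commute_of_commutator_mem_center (hle hmem) (congrArg Subtype.val h)).symm

variable {N : Subgroup G} [N.Normal]

theorem pow_eq_one_of_card_commutator_quotient {p : ℕ}
    (hcard : Nat.card (commutator (G ⧸ N)) = p)
    (hle : commutator (G ⧸ N) ≤ Subgroup.center (G ⧸ N)) (g : G) :
    g ^ (p * Nat.card (Subgroup.center (G ⧸ N)) * Nat.card N) = 1 := by
  have h1 := pow_mem_center_of_card_commutator hcard hle (g : G ⧸ N)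
  have h2 := congrArg Subtype.val
    (pow_card_eq_one' (x := (⟨_, h1⟩ : Subgroup.center (G ⧸ N))))
  have h3 : g ^ (p * Nat.card (Subgroup.center (G ⧸ N))) ∈ N := by
    rw [← QuotientGroup.eq_one_iff, QuotientGroup.mk_pow, pow_mul]
    exact h2
  rw [pow_mul]
  exact congrArg Subtype.val (pow_card_eq_one' (x := (⟨_, h3⟩ : N)))

theorem index_center_le_of_isCyclic_center_quotient [Finite G] (hN : N ≤ Subgroup.center G)
    (hcyc : IsCyclic (Subgroup.center (G ⧸ N))) :
    (Subgroup.center G).index ≤ Nat.card N * (Subgroup.center (G ⧸ N)).index := by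
  have hpos : 0 < Nat.card N := Nat.card_pos
  let Z := (Subgroup.center (G ⧸ N)).comap (QuotientGroup.mk' N)
  have hZ : Subgroup.center G ≤ Z := fun z hz => by
    rw [Subgroup.mem_comap, Subgroup.mem_center_iff]
    intro q
    obtain ⟨g, rfl⟩ := QuotientGroup.mk'_surjective N q
    rw [← map_mul, ← map_mul, Subgroup.mem_center_iff.1 hz g]
  have hidx : Z.index = (Subgroup.center (G ⧸ N)).index :=
    Subgroup.index_comap_of_surjective _ (QuotientGroup.mk'_surjective N)
  rw [← Subgroup.relIndex_mul_index hZ, hidx]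
  refine Nat.mul_le_mul_right _ ?_
  obtain ⟨⟨q, hq⟩, hgen⟩ := IsCyclic.exists_monoid_generator (α := Subgroup.center (G ⧸ N))
  obtain ⟨u, rfl⟩ := QuotientGroup.mk'_surjective N q
  have hu : u ^ Nat.card N ∈ Subgroup.center G := by
    rw [Subgroup.mem_center_iff]
    intro x
    have hmem : ⁅u, x⁆ ∈ N := by
      rw [← QuotientGroup.eq_one_iff, ← QuotientGroup.mk'_apply, map_commutatorElement,
        commutatorElement_eq_one_iff_mul_comm]
      exact (Subgroup.mem_center_iff.1 hq _).symm
    exact (pow_commute_of_commutator_mem_center (hN hmem)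
      (congrArg Subtype.val (pow_card_eq_one' (x := (⟨_, hmem⟩ : N))))).symm
  let f : Fin (Nat.card N) → Z ⧸ (Subgroup.center G).subgroupOf Z := fun i =>
    QuotientGroup.mk ((⟨u, hq⟩ : Z) ^ (i : ℕ))
  have hf : Function.Surjective f := by
    intro y
    obtain ⟨⟨x, hx⟩, rfl⟩ := QuotientGroup.mk_surjective y
    obtain ⟨j, hj⟩ := Submonoid.mem_powers_iff _ _ |>.1 (hgen ⟨_, hx⟩)
    have hj' : ((u ^ j : G) : G ⧸ N) = x := congrArg Subtype.val hj
    rw [QuotientGroup.eq] at hj'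
    refine ⟨⟨j % Nat.card N, Nat.mod_lt _ hpos⟩, ?_⟩
    rw [QuotientGroup.eq, Subgroup.mem_subgroupOf]
    have h1 : (u ^ (j % Nat.card N))⁻¹ * x = (u ^ Nat.card N) ^ (j / Nat.card N) *
        ((u ^ j)⁻¹ * x) := by
      rw [← mul_assoc, mul_left_inj, eq_mul_inv_iff_mul_eq, inv_mul_eq_iff_eq_mul, ← pow_mul,
        ← pow_add, Nat.mod_add_div]
    simpa [h1] using mul_mem (pow_mem hu _) (hN hj')
  have h := Nat.card_le_card_of_surjective f hf
  rwa [Nat.card_fin] at h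

end Extension

theorem sum_pow_mul_lt {p : ℕ} (hp : 2 ≤ p) (a : ℕ) :
    p * ∑ b ∈ Finset.range a, (p ^ b) ^ 2 < (p ^ a) ^ 2 := by
  induction a with
  | zero => simp
  | succ a ih =>
    rw [Finset.sum_range_succ, mul_add, pow_succ p a, mul_pow]
    have h : p + 1 ≤ p ^ 2 := by nlinarith
    have h' := Nat.mul_le_mul_left ((p ^ a) ^ 2) h
    linarith

section Counting

variable {G : Type*} [Group G] [Finite G] {p : ℕ}

/-- If `G / N` has commutator subgroup of order `p` and cyclic center, where `N` is a central
subgroup of order `p` contained in the commutator subgroup, then `G` is not a `GC*`-group. -/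
theorem IsPGroup.not_isGCStar_of_quotient (hG : IsPGroup p G) (hp : p.Prime) (N : Subgroup G)
    [N.Normal] (hNc : N ≤ Subgroup.center G) (hNG : N ≤ commutator G) (hN : Nat.card N = p)
    (hcyc : IsCyclic (Subgroup.center (G ⧸ N))) (hcard : Nat.card (commutator (G ⧸ N)) = p)
    (hna : ¬ ∀ a b : G ⧸ N, a * b = b * a) : ¬ IsGCStar G := by
  classical
  intro hGC
  have : Fact p.Prime := ⟨hp⟩
  have : Fintype G := Fintype.ofFinite G
  have : Fintype (G ⧸ N) := Fintype.ofFinite _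
  have hQ : IsPGroup p (G ⧸ N) := hG.to_quotient N
  have hle := hQ.le_center_of_card_eq_prime hp (commutator (G ⧸ N)) hcard
  obtain ⟨D, τ, hD, hD1, hτ, hτorth⟩ := exists_nonlinear_irreducible (G ⧸ N) hna
  have hDsq := hτ.degree_sq_mul_card_center hD hD1 hτorth hp hcard hle
  obtain ⟨c, hc⟩ := IsPGroup.iff_card.1 (hQ.to_subgroup (Subgroup.center (G ⧸ N)))
  have hDdvd := degree_dvd_card hD hτorth
  rw [← Nat.card_eq_fintype_card] at hDdvd
  obtain ⟨q, hq⟩ := IsPGroup.iff_card.1 hQ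
  obtain ⟨a, -, ha⟩ := (Nat.dvd_prime_pow hp).1 (hq ▸ hDdvd)
  have hcardG : Nat.card G = p * (p ^ c * (p ^ a) ^ 2) := by
    rw [Subgroup.card_eq_card_quotient_mul_card_subgroup N, hN, ← hDsq, hc, ha]
    ring
  have hidx : (Subgroup.center (G ⧸ N)).index = (p ^ a) ^ 2 := by
    have h := Subgroup.card_mul_index (Subgroup.center (G ⧸ N))
    rw [← hDsq, mul_comm, ha] at h
    exact Nat.eq_of_mul_eq_mul_right Nat.card_pos h
  have hindex := index_center_le_of_isCyclic_center_quotient hNc hcyc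
  rw [hidx, hN] at hindex
  obtain ⟨k, d, ρ, hpos, hspan, hinj, horth, hreg⟩ := exists_irreducible_decomposition G
  have hρ : ∀ i, IsIrrRep (ρ i) := fun i => isIrrRep_of_span_eq_top (hspan i)
  let I : Finset (Fin k) := Finset.univ.filter fun i => ∃ z ∈ N, ρ i z ≠ 1
  have hI : ∀ i, i ∈ I ↔ ∃ z ∈ N, ρ i z ≠ 1 := fun i => by simp [I]
  have hsum := sum_degree_sq_of_not_le_ker hpos hρ hreg hNc I hI
  have hd1 : ∀ i ∈ I, d i ≠ 1 := fun i hi h => by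
    obtain ⟨z, hz, hne⟩ := (hI i).1 hi
    revert hne
    generalize ρ i = r
    revert r
    rw [h]
    exact fun r hne => hne (map_eq_one_of_degree_eq_one r (hNG hz))
  have hdD : ∀ i ∈ I, d i ≠ D := fun i hi h => by
    obtain ⟨z, hz, hne⟩ := (hI i).1 hi
    have hψ := (hτ.isIrrChar hD).comp (QuotientGroup.mk'_surjective N)
    obtain ⟨σ, hσ⟩ := hGC _ _ hψ ((hρ i).isIrrChar (hpos i))
      (by rw [map_one, trace_one_eq]; exact_mod_cast hD1)
      (by rw [trace_one_eq]; exact_mod_cast hd1 i hi)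
      (by rw [map_one, trace_one_eq, trace_one_eq, h])
    have h1 := hσ z
    have hz1 : QuotientGroup.mk' N z = 1 := (QuotientGroup.eq_one_iff z).2 hz
    obtain ⟨e, he⟩ := (hρ i).exists_eq_smul_one_of_mem_center (hpos i) (hNc hz)
    beta_reduce at h1
    rw [hz1, trace_one_eq, map_natCast, he, map_smul, LinearMap.trace_one,
      Module.finrank_fin_fun, h, smul_eq_mul] at h1
    have hD0 : (D : ℂ) ≠ 0 := Nat.cast_ne_zero.2 hD.ne'
    rw [mul_eq_right₀ hD0] at h1
    exact hne (by rw [he, h1, one_smul])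
  have hdeg : ∀ i ∈ I, ∃ b < a, d i = p ^ b := fun i hi => by
    have hdvd := degree_dvd_card (hpos i) (horth i)
    rw [← Nat.card_eq_fintype_card] at hdvd
    obtain ⟨r, hr⟩ := IsPGroup.iff_card.1 hG
    obtain ⟨b, -, hb⟩ := (Nat.dvd_prime_pow hp).1 (hr ▸ hdvd)
    refine ⟨b, ?_, hb⟩
    have h1 := (degree_sq_le_index_center (hpos i) (hspan i)).trans hindex
    rw [hb, ← pow_mul, ← pow_mul, ← pow_succ', Nat.pow_le_pow_iff_right hp.one_lt] at h1
    have h2 : b ≠ a := fun h => hdD i hi (by rw [hb, ha, h])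
    omega
  choose! b hba hb using hdeg
  have hexp : ∀ g : G, g ^ p ^ (c + 2) = 1 := fun g => by
    have h := pow_eq_one_of_card_commutator_quotient hcard hle g
    rw [hc, hN] at h
    rwa [show p ^ (c + 2) = p * p ^ c * p by ring]
  have : NeZero (p ^ (c + 2)) := ⟨pow_ne_zero _ hp.ne_zero⟩
  have hfiber : ∀ j ∈ Finset.range a, (I.filter fun i => b i = j).card ≤ p ^ (c + 1) * (p - 1) := by
    intro j _
    rcases (I.filter fun i => b i = j).eq_empty_or_nonempty with h | ⟨i₀, h₀⟩
    · simp [h]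
    rw [Finset.mem_filter] at h₀
    have hj : ((p ^ j : ℕ) : ℂ) ≠ 1 := by
      rw [← h₀.2, ← hb i₀ h₀.1]
      exact_mod_cast hd1 i₀ h₀.1
    rw [← Nat.totient_prime_pow_succ hp]
    refine hGC.card_le_totient hexp hinj (fun i => (hρ i).isIrrChar (hpos i)) hj _ fun i hi => ?_
    rw [Finset.mem_filter] at hi
    rw [trace_one_eq, hb i hi.1, hi.2]
  have hbound : ∑ i ∈ I, d i ^ 2 ≤ ∑ j ∈ Finset.range a, p ^ (c + 1) * (p - 1) * (p ^ j) ^ 2 := by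
    rw [← Finset.sum_fiberwise_of_maps_to fun i hi => Finset.mem_range.2 (hba i hi)]
    refine Finset.sum_le_sum fun j hj => ?_
    have h : ∀ i ∈ I.filter fun i => b i = j, d i ^ 2 = (p ^ j) ^ 2 := fun i hi => by
      rw [Finset.mem_filter] at hi
      rw [hb i hi.1, hi.2]
    rw [Finset.sum_congr rfl h, Finset.sum_const, smul_eq_mul]
    exact Nat.mul_le_mul_right _ (hfiber j hj)
  rw [← Finset.mul_sum] at hbound
  have hlt := sum_pow_mul_lt hp.two_le a
  obtain ⟨t, rfl⟩ : ∃ t, p = t + 1 := ⟨p - 1, (Nat.succ_pred_eq_of_pos hp.pos).symm⟩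
  have ht : 0 < t := by have := hp.two_le; omega
  rw [hN, hcardG] at hsum
  rw [Nat.add_sub_cancel] at hbound
  generalize ∑ i ∈ I, d i ^ 2 = S at hsum hbound
  generalize ∑ j ∈ Finset.range a, ((t + 1) ^ j) ^ 2 = T at hlt hbound
  have hS : S = t * (t + 1) ^ c * ((t + 1) ^ a) ^ 2 := by
    have h : (t + 1) * S = (t + 1) * (t * (t + 1) ^ c * ((t + 1) ^ a) ^ 2) := by
      zify at hsum ⊢
      linear_combination hsum
    exact Nat.eq_of_mul_eq_mul_left (Nat.succ_pos t) h
  have hmul : t * (t + 1) ^ c * ((t + 1) * T) < t * (t + 1) ^ c * ((t + 1) ^ a) ^ 2 :=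
    Nat.mul_lt_mul_of_pos_left hlt (by positivity)
  rw [← hS] at hmul
  refine hmul.not_ge (hbound.trans (le_of_eq ?_))
  ring

end Counting

/-- The commutator subgroup of a non-abelian `p`-group that is a `GC*`-group has order `p`. -/
theorem IsPGroup.card_commutator_of_isGCStar {p : ℕ} (hp : p.Prime) {G : Type*} [Group G]
    [Finite G] (hG : IsPGroup p G) (hna : ¬ ∀ a b : G, a * b = b * a) (hGC : IsGCStar G) :
    Nat.card (commutator G) = p := by
  have : Fact p.Prime := ⟨hp⟩
  induction hm : Nat.card G using Nat.strong_induction_on generalizing G with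
  | _ m ih =>
  have hbot : commutator G ≠ ⊥ := fun h => hna fun a b => by
    rw [← commutatorElement_eq_one_iff_mul_comm, ← Subgroup.mem_bot, ← h]
    exact Subgroup.commutator_mem_commutator (Subgroup.mem_top a) (Subgroup.mem_top b)
  obtain ⟨z, hzG, hzc, hz⟩ := hG.exists_orderOf_eq_prime_mem_center hp (commutator G) hbot
  let N := Subgroup.zpowers z
  have hNc : N ≤ Subgroup.center G := Subgroup.zpowers_le.2 hzc
  have hNG : N ≤ commutator G := Subgroup.zpowers_le.2 hzG
  have hN : Nat.card N = p := by rw [Nat.card_zpowers, hz]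
  have hnormal : N.Normal := ⟨fun x hx g => by
    rwa [Subgroup.mem_center_iff.1 (hNc hx) g, mul_inv_cancel_right]⟩
  by_contra hne
  have hnaQ : ¬ ∀ a b : G ⧸ N, a * b = b * a := fun h => by
    refine hne (le_antisymm hNG ?_ ▸ hN)
    rw [commutator_def, Subgroup.commutator_le]
    intro a _ b _
    rw [← QuotientGroup.eq_one_iff, ← QuotientGroup.mk'_apply, map_commutatorElement,
      commutatorElement_eq_one_iff_mul_comm]
    exact h _ _
  have hGCQ := hGC.of_surjective (QuotientGroup.mk'_surjective N)
  have hlt : Nat.card (G ⧸ N) < m := by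
    rw [← hm, Subgroup.card_eq_card_quotient_mul_card_subgroup N, hN]
    exact lt_mul_of_one_lt_right Nat.card_pos hp.one_lt
  have hcard := ih _ hlt (hG.to_quotient N) hnaQ hGCQ rfl
  exact hG.not_isGCStar_of_quotient hp N hNc hNG hN (hGCQ.isCyclic_center hp hcard) hcard hnaQ hGC

/-- A non-abelian finite `p`-group is a `GC*`-group iff its center is cyclic and its
commutator subgroup has order `p`. -/
theorem pgroup_gcstar_iff {P : Type*} [Group P] [Finite P] {p : ℕ} (hp : p.Prime)
    (hP : IsPGroup p P) (hna : ¬ ∀ a b : P, a * b = b * a) :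
    IsGCStar P ↔ (IsCyclic (Subgroup.center P) ∧ Nat.card (commutator P) = p) := by
  refine ⟨fun h => ?_, fun h => hP.isGCStar hp h.1 h.2⟩
  have hcard := hP.card_commutator_of_isGCStar hp hna h
  exact ⟨h.isCyclic_center hp hcard, hcard⟩
end
end

section
/- Let G be a finite nilpotent GC*-group. Then either G is abelian, or G is a group of prime power order with cyclic center and commutator subgroup of prime order. -/
noncomputable section

namespace GCStar

open Representation
open scoped commutatorElement

section Representations

variable {G : Type*} [Group G] {V : Type*} [AddCommGroup V] [Module ℂ V]

theorem isIrreducible_iff (ρ : Representation ℂ G V) :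
    ρ.IsIrreducible ↔ Nontrivial V ∧
      ∀ U : Submodule ℂ V, (∀ g, ∀ v ∈ U, ρ g v ∈ U) → U = ⊥ ∨ U = ⊤ := by
  constructor
  · intro h
    constructor
    · by_contra hV
      rw [not_nontrivial_iff_subsingleton] at hV
      exact bot_ne_top (α := Subrepresentation ρ)
        (Subrepresentation.toSubmodule_injective (Subsingleton.elim _ _))
    · intro U hU
      rcases eq_bot_or_eq_top (⟨U, hU⟩ : Subrepresentation ρ) with h | h
      · exact Or.inl (congrArg Subrepresentation.toSubmodule h)
      · exact Or.inr (congrArg Subrepresentation.toSubmodule h)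
  · rintro ⟨hV, h⟩
    have : Nontrivial (Subrepresentation ρ) :=
      ⟨⊥, ⊤, fun h => bot_ne_top (α := Submodule ℂ V) (congrArg Subrepresentation.toSubmodule h)⟩
    refine ⟨fun σ => ?_⟩
    rcases h σ.toSubmodule (fun g v hv => σ.apply_mem_toSubmodule g hv) with h | h
    · exact Or.inl (Subrepresentation.toSubmodule_injective h)
    · exact Or.inr (Subrepresentation.toSubmodule_injective h)

/-- Transport of a representation along a linear equivalence. -/
def conjRep {W : Type*} [AddCommGroup W] [Module ℂ W] (e : W ≃ₗ[ℂ] V)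
    (ρ : Representation ℂ G W) : Representation ℂ G V where
  toFun g := e.conj (ρ g)
  map_one' := by rw [map_one]; exact e.conj_id
  map_mul' g h := by rw [map_mul]; exact e.conj_comp _ _

theorem isIrreducible_conjRep {W : Type*} [AddCommGroup W] [Module ℂ W] (e : W ≃ₗ[ℂ] V)
    {ρ : Representation ℂ G W} (hρ : ρ.IsIrreducible) : (conjRep e ρ).IsIrreducible := by
  rw [isIrreducible_iff] at hρ ⊢
  have := hρ.1
  refine ⟨e.injective.nontrivial, fun U hU => ?_⟩
  have hU' : ∀ g, ∀ v ∈ U.comap (e : W →ₗ[ℂ] V), ρ g v ∈ U.comap (e : W →ₗ[ℂ] V) := by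
    intro g v hv
    have := hU g (e v) hv
    simpa [conjRep, LinearEquiv.conj_apply] using this
  refine (hρ.2 _ hU').imp (fun h => ?_) (fun h => ?_)
  · rw [← Submodule.map_comap_eq_of_surjective (f := (e : W →ₗ[ℂ] V)) e.surjective U, h,
      Submodule.map_bot]
  · rw [← Submodule.map_comap_eq_of_surjective (f := (e : W →ₗ[ℂ] V)) e.surjective U, h,
      Submodule.map_top, LinearEquiv.range]

theorem isIrreducible_ofModule' [Module (MonoidAlgebra ℂ G) V]
    [IsScalarTower ℂ (MonoidAlgebra ℂ G) V] [IsSimpleModule (MonoidAlgebra ℂ G) V] :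
    (ofModule' (k := ℂ) (G := G) V).IsIrreducible := by
  refine (isIrreducible_iff _).mpr ⟨IsSimpleModule.nontrivial (MonoidAlgebra ℂ G) V,
    fun U hU => ?_⟩
  let U' : Submodule (MonoidAlgebra ℂ G) V :=
    { U with
      smul_mem' := fun a v hv => by
        induction a using MonoidAlgebra.induction_on with
        | of g => simpa [ofModule'] using hU g v hv
        | add a b ha hb => rw [add_smul]; exact U.add_mem ha hb
        | smul r a ha => rw [smul_assoc]; exact U.smul_mem r ha }
  refine (eq_bot_or_eq_top U').imp (fun h => ?_) (fun h => ?_)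
  · exact SetLike.coe_injective (congrArg (fun X : Submodule (MonoidAlgebra ℂ G) V => (X : Set V)) h)
  · exact SetLike.coe_injective (congrArg (fun X : Submodule (MonoidAlgebra ℂ G) V => (X : Set V)) h)

/-- Irreducible complex representations separate the points of a finite group. -/
theorem exists_isIrreducible_apply_ne_one [Finite G] {g : G} (hg : g ≠ 1) :
    ∃ (n : ℕ) (ρ : Representation ℂ G (Fin n → ℂ)), ρ.IsIrreducible ∧ ρ g ≠ 1 := by
  classical
  have hS : ∃ S : Submodule (MonoidAlgebra ℂ G) (MonoidAlgebra ℂ G),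
      IsSimpleModule (MonoidAlgebra ℂ G) S ∧ ∃ s ∈ S, MonoidAlgebra.of ℂ G g * s ≠ s := by
    by_contra! hcon
    have hfix : ∀ m ∈ sSup {S : Submodule (MonoidAlgebra ℂ G) (MonoidAlgebra ℂ G) |
        IsSimpleModule (MonoidAlgebra ℂ G) S}, MonoidAlgebra.of ℂ G g * m = m := by
      intro m hm
      rw [sSup_eq_iSup'] at hm
      induction hm using Submodule.iSup_induction' with
      | mem S x hx => exact hcon S.1 S.2 x hx
      | zero => simp
      | add x y _ _ hx hy => rw [mul_add, hx, hy]
    have h1 := hfix 1 (by rw [IsSemisimpleModule.sSup_simples_eq_top]; trivial)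
    rw [mul_one, ← map_one (MonoidAlgebra.of ℂ G)] at h1
    exact hg (MonoidAlgebra.of_injective h1)
  obtain ⟨S, hS, s, hs, hne⟩ := hS
  have : Module.Finite ℂ S := Module.Finite.trans (MonoidAlgebra ℂ G) S
  let e := (Module.finBasis ℂ S).equivFun
  refine ⟨_, conjRep e (ofModule' S), isIrreducible_conjRep e isIrreducible_ofModule', fun h => ?_⟩
  have h1 := congrArg (fun T : Module.End ℂ _ => T (e ⟨s, hs⟩)) h
  have h2 : MonoidAlgebra.of ℂ G g • (⟨s, hs⟩ : S) = ⟨s, hs⟩ := by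
    apply e.injective
    simpa [conjRep, LinearEquiv.conj_apply, ofModule'] using h1
  exact hne (congrArg Subtype.val h2)

/-- The character of an irreducible representation on coordinate space is an irreducible
character. -/
theorem isIrrChar_character {n : ℕ} (ρ : Representation ℂ G (Fin n → ℂ)) [ρ.IsIrreducible] :
    IsIrrChar ρ.character := by
  obtain ⟨hV, h⟩ := (isIrreducible_iff ρ).mp ‹_›
  refine ⟨n, ρ, ?_, fun U hU => h U fun g v hv => hU g ⟨v, hv, rfl⟩, fun _ => rfl⟩
  by_contra hn
  obtain rfl : n = 0 := by lia
  exact not_subsingleton (Fin 0 → ℂ) inferInstance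

theorem exists_eq_smul_one_of_forall_commute [FiniteDimensional ℂ V]
    (ρ : Representation ℂ G V) [ρ.IsIrreducible]
    {T : Module.End ℂ V} (hT : ∀ x, Commute T (ρ x)) : ∃ c : ℂ, T = c • 1 := by
  let f : IntertwiningMap ρ ρ := ⟨T, fun x => (hT x)⟩
  obtain ⟨c, hc⟩ := (IsIrreducible.algebraMap_intertwiningMap_bijective_of_isAlgClosed (ρ := ρ)).2 f
  refine ⟨c, ?_⟩
  have := congrArg IntertwiningMap.toLinearMap hc
  ext v
  have := congrArg (fun F : V →ₗ[ℂ] V => F v) this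
  exact this.symm

/-- The tensor product of a representation with a linear character. -/
def twist (ρ : Representation ℂ G V) (l : G →* ℂˣ) : Representation ℂ G V where
  toFun g := (l g : ℂ) • ρ g
  map_one' := by simp
  map_mul' g h := by rw [map_mul, map_mul, Units.val_mul, smul_mul_smul_comm]

@[simp]
theorem twist_apply (ρ : Representation ℂ G V) (l : G →* ℂˣ) (g : G) :
    twist ρ l g = (l g : ℂ) • ρ g := rfl

theorem character_twist (ρ : Representation ℂ G V) (l : G →* ℂˣ) (g : G) :
    (twist ρ l).character g = l g * ρ.character g := by
  simp [character]

instance isIrreducible_twist (ρ : Representation ℂ G V) [ρ.IsIrreducible] (l : G →* ℂˣ) :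
    (twist ρ l).IsIrreducible := by
  obtain ⟨hV, h⟩ := (isIrreducible_iff ρ).mp ‹_›
  refine (isIrreducible_iff _).mpr ⟨hV, fun U hU => h U fun g v hv => ?_⟩
  have := U.smul_mem ((l g)⁻¹ : ℂˣ).val (hU g v hv)
  simpa [smul_smul] using this

/-- The subgroup of elements acting by operators that commute with the whole representation. -/
def charCenter (ρ : Representation ℂ G V) : Subgroup G where
  carrier := {g | ∀ x, ⁅g, x⁆ ∈ MonoidHom.ker ρ}
  one_mem' x := by simp
  mul_mem' {a b} ha hb x := by
    have : ⁅a * b, x⁆ = a * ⁅b, x⁆ * a⁻¹ * ⁅a, x⁆ := by simp [commutatorElement_def, mul_assoc]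
    rw [this]
    exact mul_mem ((MonoidHom.normal_ker ρ).conj_mem _ (hb x) a) (ha x)
  inv_mem' {a} ha x := by
    have : ⁅a⁻¹, x⁆ = a⁻¹ * ⁅a, x⁆⁻¹ * a⁻¹⁻¹ := by simp [commutatorElement_def, mul_assoc]
    rw [this]
    exact (MonoidHom.normal_ker ρ).conj_mem _ (inv_mem (ha x)) a⁻¹

theorem mem_charCenter {ρ : Representation ℂ G V} {g : G} :
    g ∈ charCenter ρ ↔ ∀ x, ⁅g, x⁆ ∈ MonoidHom.ker ρ := Iff.rfl

theorem center_le_charCenter (ρ : Representation ℂ G V) :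
    Subgroup.center G ≤ charCenter ρ := fun g hg x => by
  rw [commutatorElement_eq_one_iff_mul_comm.mpr ((Subgroup.mem_center_iff.mp hg x).symm)]
  exact one_mem _

theorem commute_of_mem_charCenter {ρ : Representation ℂ G V} {g : G} (hg : g ∈ charCenter ρ)
    (x : G) : Commute (ρ g) (ρ x) := by
  have h : ρ ⁅g, x⁆ = 1 := hg x
  have : ρ (⁅g, x⁆ * (x * g)) = ρ (x * g) := by rw [map_mul, h, one_mul]
  rw [Commute, SemiconjBy, ← map_mul, ← map_mul, ← this]
  simp [commutatorElement_def]

variable [FiniteDimensional ℂ V] (ρ : Representation ℂ G V) [ρ.IsIrreducible]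

theorem exists_apply_eq_smul_one {g : G} (hg : g ∈ charCenter ρ) : ∃ c : ℂ, ρ g = c • 1 :=
  exists_eq_smul_one_of_forall_commute ρ (commute_of_mem_charCenter hg)

theorem character_mul_character_inv {g : G} (hg : g ∈ charCenter ρ) :
    ρ.character g * ρ.character g⁻¹ = (Module.finrank ℂ V : ℂ) ^ 2 := by
  obtain ⟨c, hc⟩ := exists_apply_eq_smul_one ρ hg
  obtain ⟨c', hc'⟩ := exists_apply_eq_smul_one ρ (inv_mem hg)
  have := ((isIrreducible_iff ρ).mp ‹_›).1
  have h : (c * c') • (1 : Module.End ℂ V) = (1 : ℂ) • 1 := by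
    rw [one_smul, ← mul_one (1 : Module.End ℂ V), ← smul_mul_smul_comm, ← hc, ← hc', ← map_mul,
      mul_inv_cancel, map_one, mul_one]
  have h1 : c * c' = 1 := smul_left_injective ℂ one_ne_zero h
  simp only [character, hc, hc', map_smul, smul_eq_mul, LinearMap.trace_one]
  linear_combination (Module.finrank ℂ V : ℂ) ^ 2 * h1

theorem character_eq_zero_of_commutator {g x : G} (hgx : ⁅x, g⁆ ∈ charCenter ρ)
    (hne : ⁅x, g⁆ ∉ MonoidHom.ker ρ) : ρ.character g = 0 := by
  obtain ⟨c, hc⟩ := exists_apply_eq_smul_one ρ hgx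
  have hc1 : c ≠ 1 := by
    rintro rfl
    exact hne (by simpa [MonoidHom.mem_ker] using hc)
  have h : ρ.character (x * g * x⁻¹) = c * ρ.character g := by
    have : x * g * x⁻¹ = ⁅x, g⁆ * g := by simp [commutatorElement_def]
    rw [this, character, map_mul, hc]
    simp [character]
  rw [char_conj] at h
  by_contra h0
  exact hc1 (mul_right_cancel₀ h0 (by rw [one_mul]; exact h.symm))

theorem sum_character_mul_inv [Fintype G] :
    ∑ g : G, ρ.character g * ρ.character g⁻¹ = Nat.card G := by
  have hG : (Nat.card G : ℂ) ≠ 0 := by exact_mod_cast Nat.card_pos.ne'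
  let _ := invertibleOfNonzero hG
  have h := char_orthonormal ρ ρ
  rw [if_pos ⟨Representation.Equiv.refl ρ⟩, inv_mul_eq_iff_eq_mul₀ hG] at h
  simpa using h

/-- If the derived subgroup acts by scalars, the square of the degree is the index of the
subgroup of elements acting by scalars. -/
theorem finrank_sq_mul_card_charCenter [Finite G] (h : commutator G ≤ charCenter ρ) :
    Module.finrank ℂ V ^ 2 * Nat.card (charCenter ρ) = Nat.card G := by
  classical
  have := Fintype.ofFinite G
  have hsum := sum_character_mul_inv ρ
  have hterm : ∀ g : G, ρ.character g * ρ.character g⁻¹ =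
      if g ∈ charCenter ρ then (Module.finrank ℂ V : ℂ) ^ 2 else 0 := by
    intro g
    split_ifs with hg
    · exact character_mul_character_inv ρ hg
    · simp only [mem_charCenter, not_forall] at hg
      obtain ⟨x, hx⟩ := hg
      have hx' : ⁅x, g⁆ ∉ MonoidHom.ker ρ := by
        rwa [← commutatorElement_inv, inv_mem_iff]
      rw [character_eq_zero_of_commutator ρ (h (Subgroup.commutator_mem_commutator
        (Subgroup.mem_top x) (Subgroup.mem_top g))) hx', zero_mul]
  simp_rw [hterm] at hsum
  rw [Finset.sum_ite, Finset.sum_const_zero, add_zero, Finset.sum_const, nsmul_eq_mul,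
    ← Fintype.card_subtype, ← Nat.card_eq_fintype_card] at hsum
  rw [mul_comm]
  exact_mod_cast hsum

end Representations

section LinearCharacters

variable {G : Type*} [Group G]

theorem exists_linearChar_ne_one [Finite G] {g : G} (hg : g ∉ commutator G) :
    ∃ l : Abelianization G →* ℂˣ, l (Abelianization.of g) ≠ 1 := by
  have : NeZero (Monoid.exponent (Abelianization G)) := ⟨Monoid.exponent_ne_zero_of_finite⟩
  refine CommGroup.exists_apply_ne_one_of_hasEnoughRootsOfUnity (Abelianization G) ℂ fun h => hg ?_
  rwa [← MonoidHom.mem_ker, Abelianization.ker_of] at h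

theorem card_linearChar [Finite G] :
    Nat.card (Abelianization G →* ℂˣ) * Nat.card (commutator G) = Nat.card G := by
  have : NeZero (Monoid.exponent (Abelianization G)) := ⟨Monoid.exponent_ne_zero_of_finite⟩
  rw [CommGroup.card_monoidHom_of_hasEnoughRootsOfUnity,
    (commutator G).card_eq_card_quotient_mul_card_subgroup]
  rfl

theorem sum_linearChar [Finite G] [Fintype (Abelianization G →* ℂˣ)] (g : G)
    [Decidable (g ∈ commutator G)] :
    ∑ l : Abelianization G →* ℂˣ, (l (Abelianization.of g) : ℂ) =
      if g ∈ commutator G then (Nat.card (Abelianization G →* ℂˣ) : ℂ) else 0 := by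
  split_ifs with hg
  · have h : Abelianization.of g = 1 := by
      rwa [← MonoidHom.mem_ker, Abelianization.ker_of]
    simp [h]
  · obtain ⟨l₀, hl₀⟩ := exists_linearChar_ne_one hg
    have h := Fintype.sum_equiv (Equiv.mulLeft l₀)
      (fun l => ((l₀ * l) (Abelianization.of g) : ℂ))
      (fun l : Abelianization G →* ℂˣ => (l (Abelianization.of g) : ℂ)) (fun l => rfl)
    simp only [MonoidHom.mul_apply, Units.val_mul, ← Finset.mul_sum] at h
    by_contra h0
    exact hl₀ (Units.ext (mul_right_cancel₀ h0 (by rw [h, Units.val_one, one_mul])))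

/-- The linear characters that fix the character of `ρ` under multiplication. -/
def twistStabilizer {V : Type*} [AddCommGroup V] [Module ℂ V] (ρ : Representation ℂ G V) :
    Subgroup (Abelianization G →* ℂˣ) where
  carrier := {l | ∀ g, (l (Abelianization.of g) : ℂ) * ρ.character g = ρ.character g}
  one_mem' g := by simp
  mul_mem' {a b} ha hb g := by
    rw [MonoidHom.mul_apply, Units.val_mul, mul_assoc, hb g, ha g]
  inv_mem' {a} ha g := by
    rw [MonoidHom.inv_apply, Units.inv_mul_eq_iff_eq_mul, ha g]

theorem card_twistStabilizer_mul [Fintype G] {V : Type*} [AddCommGroup V] [Module ℂ V]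
    [FiniteDimensional ℂ V] (ρ : Representation ℂ G V) [ρ.IsIrreducible]
    [DecidablePred (· ∈ commutator G)] :
    (Nat.card (twistStabilizer ρ) : ℂ) * Nat.card (commutator G) =
      ∑ g : G, if g ∈ commutator G then ρ.character g * ρ.character g⁻¹ else 0 := by
  classical
  have : NeZero (Monoid.exponent (Abelianization G)) := ⟨Monoid.exponent_ne_zero_of_finite⟩
  have : Finite (Abelianization G →* ℂˣ) := by
    refine Nat.finite_of_card_ne_zero ?_
    rw [CommGroup.card_monoidHom_of_hasEnoughRootsOfUnity]
    exact Nat.card_pos.ne'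
  have := Fintype.ofFinite (Abelianization G →* ℂˣ)
  have hG : (Nat.card G : ℂ) ≠ 0 := by exact_mod_cast Nat.card_pos.ne'
  let _ := invertibleOfNonzero hG
  have hinner : ∀ l : Abelianization G →* ℂˣ,
      ∑ g : G, (l (Abelianization.of g) : ℂ) * (ρ.character g * ρ.character g⁻¹) =
        if l ∈ twistStabilizer ρ then (Nat.card G : ℂ) else 0 := by
    intro l
    split_ifs with hl
    · rw [← sum_character_mul_inv ρ]
      exact Finset.sum_congr rfl fun g _ => by rw [← mul_assoc, hl g]
    · have h := char_orthonormal (twist ρ (l.comp Abelianization.of)) ρ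
      rw [if_neg] at h
      · simpa [character_twist, mul_assoc] using h
      · rintro ⟨e⟩
        refine hl fun g => ?_
        have := congrFun (char_iso e) g
        rw [character_twist] at this
        exact this.symm
  have h1 : ∑ l : Abelianization G →* ℂˣ,
      ∑ g : G, (l (Abelianization.of g) : ℂ) * (ρ.character g * ρ.character g⁻¹) =
      Nat.card (twistStabilizer ρ) * Nat.card G := by
    simp_rw [hinner]
    rw [Finset.sum_ite, Finset.sum_const_zero, add_zero, Finset.sum_const, nsmul_eq_mul,
      ← Fintype.card_subtype, ← Nat.card_eq_fintype_card]
  rw [Finset.sum_comm] at h1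
  simp_rw [← Finset.sum_mul, sum_linearChar, ite_mul, zero_mul, ← mul_ite_zero, ← Finset.mul_sum]
    at h1
  have hcard : (Nat.card (Abelianization G →* ℂˣ) : ℂ) * Nat.card (commutator G) = Nat.card G :=
    by exact_mod_cast card_linearChar
  have hne : (Nat.card (Abelianization G →* ℂˣ) : ℂ) ≠ 0 := by exact_mod_cast Nat.card_pos.ne'
  apply mul_left_cancel₀ hne
  simp only [mul_ite, mul_zero] at h1
  rw [h1, ← hcard]
  ring

/-- The values of a character on elements of exponent `m` lie in the ring generated by a
primitive `m`-th root of unity. -/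
theorem map_character_eq_of_map_root_eq {V : Type*} [AddCommGroup V] [Module ℂ V]
    [FiniteDimensional ℂ V] (ρ : Representation ℂ G V) {m : ℕ} [NeZero m] {ζ : ℂ}
    (hζ : IsPrimitiveRoot ζ m) {g : G} (hg : g ^ m = 1) {σ τ : ℂ ≃+* ℂ} (h : σ ζ = τ ζ) :
    σ (ρ.character g) = τ (ρ.character g) := by
  rw [character, Module.End.trace_eq_sum_roots_charpoly_of_splits (IsAlgClosed.splits _),
    map_multiset_sum, map_multiset_sum]
  congr 1
  refine Multiset.map_congr rfl fun μ hμ => ?_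
  have hev : Module.End.HasEigenvalue (ρ g) μ :=
    (Module.End.hasEigenvalue_iff_isRoot_charpoly _ _).mpr (Polynomial.isRoot_of_mem_roots hμ)
  obtain ⟨v, hv⟩ := hev.exists_hasEigenvector
  have hpow : μ ^ m = 1 := by
    have h1 := hv.pow_apply m
    rw [← map_pow, hg, map_one, Module.End.one_apply] at h1
    exact (smul_left_injective ℂ hv.2 (by simpa using h1)).symm
  obtain ⟨i, -, rfl⟩ := hζ.eq_pow_of_pow_eq_one hpow
  rw [map_pow, map_pow, h]

end LinearCharacters

section GCStarGroups

variable {G : Type*} [Group G]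

theorem degree_ne_one_of_not_commutator_le {n : ℕ} {ρ : Representation ℂ G (Fin n → ℂ)}
    (h : ¬ commutator G ≤ MonoidHom.ker ρ) : n ≠ 1 := by
  rintro rfl
  refine h ?_
  have hscalar : ∀ T : Module.End ℂ (Fin 1 → ℂ), T = T 1 0 • 1 := by
    intro T
    ext i j
    fin_cases i
    fin_cases j
    have : (Pi.single 0 1 : Fin 1 → ℂ) = 1 := by
      ext j
      fin_cases j
      rfl
    simp [this]
  rw [commutator_def, Subgroup.commutator_le]
  intro x _ y _
  have hxy : ρ (x * y) = ρ (y * x) := by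
    rw [map_mul, map_mul, hscalar (ρ x), hscalar (ρ y), smul_mul_smul_comm, smul_mul_smul_comm,
      mul_comm (ρ x 1 0)]
  rw [MonoidHom.mem_ker, commutatorElement_def, mul_assoc, map_mul, hxy, ← map_mul]
  simp

theorem galoisConj_character (hG : IsGCStar G) {n : ℕ}
    (ρ τ : Representation ℂ G (Fin n → ℂ)) [ρ.IsIrreducible] [τ.IsIrreducible]
    (hn : n ≠ 1) : GaloisConj ρ.character τ.character := by
  refine hG _ _ (isIrrChar_character ρ) (isIrrChar_character τ) ?_ ?_ ?_
  all_goals simp [hn]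

/-- Nonlinear irreducible representations of equal degree of a `GC*`-group have the same central
elements in their kernels. -/
theorem mem_ker_of_mem_ker (hG : IsGCStar G) {n : ℕ} (ρ τ : Representation ℂ G (Fin n → ℂ))
    [ρ.IsIrreducible] [τ.IsIrreducible] (hn : n ≠ 1) {z : G} (hz : z ∈ charCenter τ)
    (hρ : z ∈ MonoidHom.ker ρ) : z ∈ MonoidHom.ker τ := by
  obtain ⟨σ, hσ⟩ := galoisConj_character hG ρ τ hn
  obtain ⟨c, hc⟩ := exists_apply_eq_smul_one τ hz
  have := ((isIrreducible_iff τ).mp ‹_›).1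
  have hn0 : (n : ℂ) ≠ 0 := by
    have := Module.finrank_pos (R := ℂ) (M := Fin n → ℂ)
    rw [Module.finrank_fin_fun] at this
    exact_mod_cast this.ne'
  have h := hσ z
  rw [character, character, hc, MonoidHom.mem_ker.mp hρ] at h
  simp only [map_smul, LinearMap.trace_one, Module.finrank_fin_fun, map_natCast, smul_eq_mul] at h
  have hc1 : c = 1 := mul_right_cancel₀ hn0 (by rw [h, one_mul])
  rw [MonoidHom.mem_ker, hc, hc1, one_smul]

/-- In a `GC*`-group, the kernel of a nonlinear irreducible representation lies in the derived
subgroup. -/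
theorem ker_le_commutator [Finite G] (hG : IsGCStar G) {n : ℕ}
    (ρ : Representation ℂ G (Fin n → ℂ)) [ρ.IsIrreducible] (hn : n ≠ 1) :
    MonoidHom.ker ρ ≤ commutator G := by
  intro z hz
  by_contra hzG
  obtain ⟨l, hl⟩ := exists_linearChar_ne_one hzG
  have hρz : ρ z = 1 := hz
  have htw : z ∈ charCenter (twist ρ (l.comp Abelianization.of)) := by
    intro x
    have hzx : ⁅z, x⁆ ∈ MonoidHom.ker ρ := by
      rw [commutatorElement_def, mul_assoc, mul_assoc, ← mul_assoc x]
      exact mul_mem hz ((MonoidHom.normal_ker ρ).conj_mem _ (inv_mem hz) x)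
    rw [MonoidHom.mem_ker, twist_apply, MonoidHom.mem_ker.mp hzx]
    simp [map_commutatorElement, commutatorElement_eq_one_iff_mul_comm.mpr (mul_comm (l _) (l _))]
  have h := mem_ker_of_mem_ker hG ρ (twist ρ (l.comp Abelianization.of)) hn htw hz
  have := ((isIrreducible_iff ρ).mp ‹_›).1
  rw [MonoidHom.mem_ker, twist_apply, hρz] at h
  refine hl (Units.ext ?_)
  exact smul_left_injective ℂ (one_ne_zero (α := Module.End ℂ (Fin n → ℂ))) (by simpa using h)

theorem exists_isIrreducible_of_not_commutator_le [Finite G] (N : Subgroup G) [N.Normal]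
    (hN : ¬ commutator G ≤ N) :
    ∃ (n : ℕ) (ρ : Representation ℂ G (Fin n → ℂ)), ρ.IsIrreducible ∧ n ≠ 1 ∧
      N ≤ MonoidHom.ker ρ := by
  obtain ⟨c, hc, hcN⟩ := SetLike.not_le_iff_exists.mp hN
  have hc1 : (c : G ⧸ N) ≠ 1 := by rwa [Ne, QuotientGroup.eq_one_iff]
  obtain ⟨n, ρ, hρ, hne⟩ := exists_isIrreducible_apply_ne_one hc1
  let σ : Representation ℂ G (Fin n → ℂ) := MonoidHom.comp ρ (QuotientGroup.mk' N)
  refine ⟨n, σ, ?_, degree_ne_one_of_not_commutator_le (ρ := σ) fun h => hne (h hc), ?_⟩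
  · obtain ⟨hV, h⟩ := (isIrreducible_iff ρ).mp hρ
    refine (isIrreducible_iff σ).mpr ⟨hV, fun U hU => h U fun g v hv => ?_⟩
    obtain ⟨g, rfl⟩ := QuotientGroup.mk'_surjective N g
    exact hU g v hv
  · intro x hx
    have : (x : G ⧸ N) = 1 := (QuotientGroup.eq_one_iff x).mpr hx
    rw [MonoidHom.mem_ker]
    change ρ (x : G ⧸ N) = 1
    rw [this, map_one]

/-- Every normal subgroup of a `GC*`-group is comparable with the derived subgroup. -/
theorem commutator_le_or_le_commutator [Finite G] (hG : IsGCStar G) (N : Subgroup G) [N.Normal] :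
    commutator G ≤ N ∨ N ≤ commutator G := by
  by_cases hN : commutator G ≤ N
  · exact Or.inl hN
  · obtain ⟨n, ρ, hρ, hn, hker⟩ := exists_isIrreducible_of_not_commutator_le N hN
    exact Or.inr (hker.trans (ker_le_commutator hG ρ hn))

theorem isGCStar_quotient (hG : IsGCStar G) (N : Subgroup G) [N.Normal] : IsGCStar (G ⧸ N) := by
  have inflate : ∀ χ : G ⧸ N → ℂ, IsIrrChar χ → IsIrrChar fun g : G => χ g := by
    rintro χ ⟨n, ρ, hn, hirr, hχ⟩
    refine ⟨n, MonoidHom.comp ρ (QuotientGroup.mk' N), hn, fun U hU => hirr U fun g => ?_,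
      fun g => hχ g⟩
    obtain ⟨g, rfl⟩ := QuotientGroup.mk'_surjective N g
    exact hU g
  intro χ ψ hχ hψ hχ1 hψ1 heq
  obtain ⟨σ, hσ⟩ := hG _ _ (inflate χ hχ) (inflate ψ hψ) hχ1 hψ1 heq
  refine ⟨σ, fun g => ?_⟩
  obtain ⟨g, rfl⟩ := QuotientGroup.mk'_surjective N g
  exact hσ g

theorem index_twistStabilizer_lt (hG : IsGCStar G) {n : ℕ} (ρ : Representation ℂ G (Fin n → ℂ))
    [ρ.IsIrreducible] (hn : n ≠ 1) {m : ℕ} (hm : 1 < m) (hexp : ∀ g : G, g ^ m = 1) :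
    (twistStabilizer ρ).index < m := by
  have : NeZero m := ⟨by lia⟩
  have hζ := Complex.isPrimitiveRoot_exp m (NeZero.ne m)
  set ζ := Complex.exp (2 * Real.pi * Complex.I / m)
  have hconj : ∀ l : Abelianization G →* ℂˣ, ∃ σ : ℂ ≃+* ℂ, ∀ g,
      (l (Abelianization.of g) : ℂ) * ρ.character g = σ (ρ.character g) := by
    intro l
    obtain ⟨σ, hσ⟩ := galoisConj_character hG ρ (twist ρ (l.comp Abelianization.of)) hn
    exact ⟨σ, fun g => by rw [← hσ, character_twist]; rfl⟩
  choose σ hσ using hconj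
  have hmem : ∀ l, σ l ζ ∈ (Polynomial.nthRootsFinset m (1 : ℂ)).erase 1 := by
    intro l
    rw [Finset.mem_erase, Polynomial.mem_nthRootsFinset (by lia), ← map_pow, hζ.pow_eq_one, map_one]
    exact ⟨fun h => hζ.ne_one hm ((σ l).injective (by rw [h, map_one])), rfl⟩
  let f : (Abelianization G →* ℂˣ) ⧸ twistStabilizer ρ →
      (Polynomial.nthRootsFinset m (1 : ℂ)).erase 1 := fun q => ⟨σ q.out ζ, hmem _⟩
  have hf : Function.Injective f := by
    intro q r hqr
    have h : σ q.out ζ = σ r.out ζ := congrArg Subtype.val hqr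
    rw [← q.out_eq', ← r.out_eq', QuotientGroup.eq]
    intro g
    rw [MonoidHom.mul_apply, MonoidHom.inv_apply, Units.val_mul, mul_assoc,
      Units.inv_mul_eq_iff_eq_mul, hσ, hσ]
    exact (map_character_eq_of_map_root_eq ρ hζ (hexp g) h).symm
  have := Nat.card_le_card_of_injective f hf
  rw [← Subgroup.index, Nat.card_eq_fintype_card, Fintype.card_coe, Finset.card_erase_of_mem
    (by rw [Polynomial.mem_nthRootsFinset (by lia)]; exact one_pow m),
    hζ.card_nthRootsFinset] at this
  lia

end GCStarGroups

section GroupTheory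

variable {G : Type*} [Group G]

theorem commutatorElement_pow_left {g x : G} (h : ⁅g, x⁆ ∈ Subgroup.center G) (k : ℕ) :
    ⁅g ^ k, x⁆ = ⁅g, x⁆ ^ k := by
  induction k with
  | zero => simp
  | succ k ih =>
    have hstep : ⁅g ^ (k + 1), x⁆ = g ^ k * ⁅g, x⁆ * (g ^ k)⁻¹ * ⁅g ^ k, x⁆ := by
      simp [commutatorElement_def, mul_assoc, pow_succ]
    rw [hstep, Subgroup.mem_center_iff.mp h, mul_inv_cancel_right, ih, pow_succ']

theorem mem_center_iff_commutatorElement {g : G} :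
    g ∈ Subgroup.center G ↔ ∀ x : G, ⁅g, x⁆ = 1 := by
  simp [Subgroup.mem_center_iff, commutatorElement_eq_one_iff_mul_comm, eq_comm]

theorem commutatorElement_mem_commutator (g x : G) : ⁅g, x⁆ ∈ commutator G :=
  Subgroup.commutator_mem_commutator (Subgroup.mem_top g) (Subgroup.mem_top x)

theorem pow_card_eq_one_of_mem {H : Subgroup G} {x : G} (hx : x ∈ H) : x ^ Nat.card H = 1 :=
  congrArg Subtype.val (pow_card_eq_one' (x := (⟨x, hx⟩ : H)))

theorem pow_mem_center [Finite G] {p : ℕ} (hcard : Nat.card (commutator G) = p)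
    (hle : commutator G ≤ Subgroup.center G) (g : G) : g ^ p ∈ Subgroup.center G := by
  rw [mem_center_iff_commutatorElement]
  intro x
  have hmem := commutatorElement_mem_commutator g x
  rw [commutatorElement_pow_left (hle hmem), ← hcard]
  exact pow_card_eq_one_of_mem hmem

theorem normal_zpowers_of_mem_center {z : G} (hz : z ∈ Subgroup.center G) :
    (Subgroup.zpowers z).Normal where
  conj_mem n hn g := by
    rw [Subgroup.mem_center_iff.mp (Subgroup.zpowers_le.mpr hz hn) g, mul_inv_cancel_right]
    exact hn

theorem exists_mem_center_orderOf_prime [Finite G] [Nontrivial G] [Group.IsNilpotent G] :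
    ∃ z ∈ Subgroup.center G, (orderOf z).Prime := by
  have : Nontrivial (Subgroup.center G)  :=
    (Subgroup.nontrivial_iff_ne_bot _).mpr (Group.IsNilpotent.center_ne_bot G)
  obtain ⟨p, hp, hdvd⟩ := Nat.exists_prime_and_dvd
    (Finite.one_lt_card (α := Subgroup.center G)).ne'
  have := Fact.mk hp
  obtain ⟨z, hz⟩ := exists_prime_orderOf_dvd_card' p hdvd
  exact ⟨z, z.2, by rwa [Subgroup.orderOf_coe, hz]⟩

theorem commutator_ne_bot (hG : ¬ ∀ a b : G, a * b = b * a) : commutator G ≠ ⊥ := by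
  intro h
  refine hG fun a b => commutatorElement_eq_one_iff_mul_comm.mp ?_
  rw [← Subgroup.mem_bot, ← h]
  exact commutatorElement_mem_commutator a b

theorem exists_forall_mem_charCenter [Finite G] {V : Type*} [AddCommGroup V] [Module ℂ V]
    [FiniteDimensional ℂ V] (ρ : Representation ℂ G V) [ρ.IsIrreducible] :
    ∃ g ∈ charCenter ρ, ∀ k ∈ charCenter ρ, ∃ i : ℤ, k * (g ^ i)⁻¹ ∈ MonoidHom.ker ρ := by
  have := ((isIrreducible_iff ρ).mp ‹_›).1
  have hinj := smul_left_injective ℂ (one_ne_zero (α := Module.End ℂ V))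
  choose c hc using fun g : charCenter ρ => exists_apply_eq_smul_one ρ g.2
  let f : charCenter ρ →* ℂ :=
    { toFun := c
      map_one' := hinj (by simp [← hc])
      map_mul' := fun a b => hinj (by
        change c (a * b) • (1 : Module.End ℂ V) = (c a * c b) • (1 : Module.End ℂ V)
        rw [← hc, Subgroup.coe_mul, map_mul, hc, hc, smul_mul_smul_comm, one_mul]) }
  have : Finite f.toHomUnits.range := Finite.of_surjective _ f.toHomUnits.rangeRestrict_surjective
  obtain ⟨⟨_, g, rfl⟩, hg⟩ := IsCyclic.exists_generator (α := f.toHomUnits.range)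
  refine ⟨g, g.2, fun k hk => ?_⟩
  obtain ⟨i, hi⟩ := hg ⟨_, ⟨k, hk⟩, rfl⟩
  refine ⟨i, ?_⟩
  have hik : f.toHomUnits (⟨k, hk⟩ * (g ^ i)⁻¹) = 1 := by
    rw [map_mul, map_inv, map_zpow, mul_inv_eq_one]
    exact (congrArg Subtype.val hi).symm
  have h1 : c (⟨k, hk⟩ * (g ^ i)⁻¹) = 1 := congrArg Units.val hik
  have h2 := hc (⟨k, hk⟩ * (g ^ i)⁻¹)
  rw [h1, one_smul] at h2
  exact h2

theorem isCyclic_center_of_ker_eq_bot [Finite G] {V : Type*} [AddCommGroup V] [Module ℂ V]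
    [FiniteDimensional ℂ V] (ρ : Representation ℂ G V) [ρ.IsIrreducible]
    (hker : MonoidHom.ker ρ = ⊥) : IsCyclic (Subgroup.center G) := by
  obtain ⟨g, hg, hgen⟩ := exists_forall_mem_charCenter ρ
  simp_rw [hker, Subgroup.mem_bot, mul_inv_eq_one] at hgen
  have hgZ : g ∈ Subgroup.center G :=
    mem_center_iff_commutatorElement.mpr fun x => by simpa [hker] using hg x
  refine ⟨⟨g, hgZ⟩, fun k => ?_⟩
  obtain ⟨i, hi⟩ := hgen k (center_le_charCenter ρ k.2)
  exact ⟨i, Subtype.ext hi.symm⟩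

/-- If the kernel of an irreducible representation is central of exponent dividing the prime `p`,
then the centre has index `1` or `p` in the subgroup of elements acting by scalars. -/
theorem card_charCenter_eq [Finite G] {V : Type*} [AddCommGroup V] [Module ℂ V]
    [FiniteDimensional ℂ V] (ρ : Representation ℂ G V) [ρ.IsIrreducible] {p : ℕ} (hp : p.Prime)
    (hker : MonoidHom.ker ρ ≤ Subgroup.center G) (hpow : ∀ x ∈ MonoidHom.ker ρ, x ^ p = 1) :
    Nat.card (charCenter ρ) = Nat.card (Subgroup.center G) ∨
      Nat.card (charCenter ρ) = p * Nat.card (Subgroup.center G) := by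
  obtain ⟨g, hg, hgen⟩ := exists_forall_mem_charCenter ρ
  have hgp : g ^ p ∈ Subgroup.center G := mem_center_iff_commutatorElement.mpr fun x => by
    rw [commutatorElement_pow_left (hker (hg x)), hpow _ (hg x)]
  let Z := (Subgroup.center G).subgroupOf (charCenter ρ)
  have hgpow : (QuotientGroup.mk ⟨g, hg⟩ : charCenter ρ ⧸ Z) ^ p = 1 := by
    rw [← QuotientGroup.mk_pow, QuotientGroup.eq_one_iff]
    exact hgp
  have hord : orderOf (QuotientGroup.mk ⟨g, hg⟩ : charCenter ρ ⧸ Z) = Z.index := by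
    refine orderOf_eq_card_of_forall_mem_zpowers fun q => ?_
    obtain ⟨k, rfl⟩ := QuotientGroup.mk_surjective q
    obtain ⟨i, hi⟩ := hgen k k.2
    refine ⟨i, (mul_inv_eq_one.mp ?_).symm⟩
    change (QuotientGroup.mk k : charCenter ρ ⧸ Z) * (QuotientGroup.mk ⟨g, hg⟩ ^ i)⁻¹ = 1
    rw [← QuotientGroup.mk_zpow, ← QuotientGroup.mk_inv, ← QuotientGroup.mk_mul,
      QuotientGroup.eq_one_iff]
    exact hker hi
  have hcard : Z.index * Nat.card (Subgroup.center G) = Nat.card (charCenter ρ) := by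
    rw [← Nat.card_congr (Subgroup.subgroupOfEquivOfLe (center_le_charCenter ρ)).toEquiv]
    exact Z.index_mul_card
  rcases (Nat.dvd_prime hp).mp (hord ▸ orderOf_dvd_of_pow_eq_one hgpow) with h | h
  · exact Or.inl (by rw [← hcard, h, one_mul])
  · exact Or.inr (by rw [← hcard, h])

theorem prime_mul_sq_ne_sq {p a b : ℕ} (hp : p.Prime) (hb : b ≠ 0) : p * a ^ 2 ≠ b ^ 2 := by
  intro h
  have := Fact.mk hp
  have ha : a ≠ 0 := by
    rintro rfl
    exact pow_ne_zero 2 hb (by simpa using h.symm)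
  have hval := congrArg (padicValNat p) h
  rw [padicValNat.mul hp.ne_zero (pow_ne_zero 2 ha), padicValNat.pow, padicValNat.pow,
    padicValNat.self hp.one_lt] at hval
  lia

theorem eq_of_sq_mul_eq {p a b c d z n : ℕ} (hp : p.Prime) (hn : n ≠ 0)
    (ha : a ^ 2 * c = n) (hb : b ^ 2 * d = n)
    (hc : c = z ∨ c = p * z) (hd : d = z ∨ d = p * z) : a = b := by
  have ha0 : a ≠ 0 := by rintro rfl; exact hn (by simp [← ha])
  have hb0 : b ≠ 0 := by rintro rfl; exact hn (by simp [← hb])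
  have hz : 0 < z := by
    refine Nat.pos_of_ne_zero ?_
    rintro rfl
    exact hn (by rcases hc with rfl | rfl <;> simp [← ha])
  have hsq : a ^ 2 = b ^ 2 := by
    rcases hc with rfl | rfl <;> rcases hd with rfl | rfl
    · exact Nat.eq_of_mul_eq_mul_right hz (ha.trans hb.symm)
    · refine absurd (Nat.eq_of_mul_eq_mul_right hz ?_) (prime_mul_sq_ne_sq (a := b) hp ha0)
      rw [ha, ← hb]; ring
    · refine absurd (Nat.eq_of_mul_eq_mul_right hz ?_) (prime_mul_sq_ne_sq (a := a) hp hb0)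
      rw [hb, ← ha]; ring
    · exact Nat.eq_of_mul_eq_mul_right (Nat.mul_pos hp.pos hz) (ha.trans hb.symm)
  exact Nat.pow_left_injective two_ne_zero hsq

end GroupTheory

section Classification

variable {G : Type*} [Group G]

theorem not_commutator_le_ker [Finite G] {n : ℕ} (ρ : Representation ℂ G (Fin n → ℂ))
    [ρ.IsIrreducible] (hn : n ≠ 1) : ¬ commutator G ≤ MonoidHom.ker ρ := by
  intro h
  have htop : charCenter ρ = ⊤ :=
    top_unique fun g _ x => h (commutatorElement_mem_commutator g x)
  have hcard := finrank_sq_mul_card_charCenter ρ (htop ▸ le_top)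
  rw [htop, Subgroup.card_top, Module.finrank_fin_fun] at hcard
  have hsq : n ^ 2 = 1 := Nat.eq_of_mul_eq_mul_right Nat.card_pos (by rw [hcard, one_mul])
  exact hn (by simpa using hsq)

theorem card_dvd_of_lt_of_card_eq_sq [Finite G] {p : ℕ} (hp : p.Prime) {H K : Subgroup G}
    (hle : H ≤ K) (hnle : ¬ K ≤ H) (hK : Nat.card K = p ^ 2) : Nat.card H ∣ p := by
  obtain ⟨i, hi, hcard⟩ := (Nat.dvd_prime_pow hp).mp (hK ▸ Subgroup.card_dvd_of_le hle)
  have hi2 : i ≠ 2 := by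
    rintro rfl
    exact hnle (Subgroup.eq_of_le_of_card_ge hle (by rw [hcard, hK])).ge
  rw [hcard]
  exact (pow_dvd_pow p (by lia : i ≤ 1)).trans (pow_one p).dvd

/-- If the commutator subgroup of a `GC*`-group has prime order, it is
generated by every central element of prime order. -/
theorem zpowers_eq_commutator [Finite G] (hG : IsGCStar G)
    (hcard : (Nat.card (commutator G)).Prime) {z : G} (hz : z ∈ Subgroup.center G)
    (hord : (orderOf z).Prime) : Subgroup.zpowers z = commutator G := by
  have := normal_zpowers_of_mem_center hz
  rcases commutator_le_or_le_commutator hG (Subgroup.zpowers z) with h | h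
  · have hdvd := Subgroup.card_dvd_of_le h
    rw [Nat.card_zpowers, Nat.prime_dvd_prime_iff_eq hcard hord] at hdvd
    exact (Subgroup.eq_of_le_of_card_ge h (by rw [Nat.card_zpowers, hdvd])).symm
  · have hdvd := Subgroup.card_dvd_of_le h
    rw [Nat.card_zpowers, Nat.prime_dvd_prime_iff_eq hord hcard] at hdvd
    exact Subgroup.eq_of_le_of_card_ge h (by rw [Nat.card_zpowers, hdvd])

theorem isPGroup_of_prime_card_commutator [Finite G] [Group.IsNilpotent G] (hG : IsGCStar G)
    {p : ℕ} (hp : p.Prime) (hcard : Nat.card (commutator G) = p) :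
    IsPGroup p G ∧ IsCyclic (Subgroup.center G) ∧ commutator G ≤ Subgroup.center G := by
  have hprime : (Nat.card (commutator G)).Prime := hcard ▸ hp
  have hne : commutator G ≠ ⊥ := by
    intro h
    rw [h, Subgroup.card_bot] at hcard
    exact hp.one_lt.ne hcard
  have : Nontrivial G := by
    by_contra hG'
    rw [not_nontrivial_iff_subsingleton] at hG'
    exact hne (Subsingleton.elim _ _)
  have hle : commutator G ≤ Subgroup.center G := by
    obtain ⟨z, hz, hord⟩ := exists_mem_center_orderOf_prime (G := G)
    rw [← zpowers_eq_commutator hG hprime hz hord]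
    exact Subgroup.zpowers_le.mpr hz
  refine ⟨?_, ?_, hle⟩
  · refine IsPGroup.of_card (Nat.eq_prime_pow_of_unique_prime_dvd Nat.card_pos.ne' ?_)
    intro q hq hdvd
    by_contra hqp
    have := Fact.mk hq
    obtain ⟨g, hg⟩ := exists_prime_orderOf_dvd_card' q hdvd
    have hord : orderOf (g ^ p) = q := by
      rw [Nat.Coprime.orderOf_pow (hg ▸ (Nat.coprime_primes hq hp).mpr hqp), hg]
    have h := zpowers_eq_commutator hG hprime (pow_mem_center hcard hle g) (hord.symm ▸ hq)
    rw [← h, Nat.card_zpowers, hord] at hcard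
    exact hqp hcard
  · obtain ⟨n, ρ, hρ, hn, -⟩ := exists_isIrreducible_of_not_commutator_le (⊥ : Subgroup G)
      (by rwa [le_bot_iff])
    refine isCyclic_center_of_ker_eq_bot ρ ?_
    have hker := ker_le_commutator hG ρ hn
    rcases (Nat.dvd_prime hp).mp (hcard ▸ Subgroup.card_dvd_of_le hker) with h | h
    · exact Subgroup.card_eq_one.mp h
    · exact absurd (Subgroup.eq_of_le_of_card_ge hker (by rw [h, hcard])).ge
        (not_commutator_le_ker ρ hn)

theorem degree_eq_of_commutator_le_center [Finite G] (hG : IsGCStar G) {p : ℕ} (hp : p.Prime)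
    (hcard : Nat.card (commutator G) = p ^ 2) (hle : commutator G ≤ Subgroup.center G) {m n : ℕ}
    (ρ : Representation ℂ G (Fin m → ℂ)) [ρ.IsIrreducible] (hm : m ≠ 1)
    (τ : Representation ℂ G (Fin n → ℂ)) [τ.IsIrreducible] (hn : n ≠ 1) : m = n := by
  have key : ∀ (k : ℕ) (σ : Representation ℂ G (Fin k → ℂ)) [σ.IsIrreducible], k ≠ 1 →
      k ^ 2 * Nat.card (charCenter σ) = Nat.card G ∧
        (Nat.card (charCenter σ) = Nat.card (Subgroup.center G) ∨
          Nat.card (charCenter σ) = p * Nat.card (Subgroup.center G)) := by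
    intro k σ _ hk
    have hker := ker_le_commutator hG σ hk
    have hdvd := card_dvd_of_lt_of_card_eq_sq hp hker (not_commutator_le_ker σ hk) hcard
    refine ⟨?_, card_charCenter_eq σ hp (hker.trans hle) fun x hx => ?_⟩
    · simpa using finrank_sq_mul_card_charCenter σ (hle.trans (center_le_charCenter σ))
    · obtain ⟨c, hc⟩ := hdvd
      rw [hc, pow_mul, pow_card_eq_one_of_mem hx, one_pow]
  exact eq_of_sq_mul_eq hp Nat.card_pos.ne' (key m ρ hm).1 (key n τ hn).1 (key m ρ hm).2
    (key n τ hn).2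

/-- The degree of an irreducible character that is faithful on the centre, when the centre lies
between the second and third terms of the lower central series, in terms of the number of linear
characters fixing it. -/
theorem card_twistStabilizer_mul_card_commutator [Finite G]
    (hZ : Subgroup.center G ≤ commutator G)
    (hcomm : ∀ g ∈ commutator G, ∀ x, ⁅g, x⁆ ∈ Subgroup.center G) {n : ℕ}
    (τ : Representation ℂ G (Fin n → ℂ)) [τ.IsIrreducible]
    (hker : ∀ y ∈ Subgroup.center G, y ∈ MonoidHom.ker τ → y = 1) :
    Nat.card (twistStabilizer τ) * Nat.card (commutator G) =
      Nat.card (Subgroup.center G) * n ^ 2 := by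
  classical
  have := Fintype.ofFinite G
  have h := card_twistStabilizer_mul τ
  have hterm : ∀ g : G, (if g ∈ commutator G then τ.character g * τ.character g⁻¹ else 0) =
      if g ∈ Subgroup.center G then (n : ℂ) ^ 2 else 0 := by
    intro g
    by_cases hgZ : g ∈ Subgroup.center G
    · rw [if_pos (hZ hgZ), if_pos hgZ,
        character_mul_character_inv τ (center_le_charCenter τ hgZ), Module.finrank_fin_fun]
    · rw [if_neg hgZ]
      refine ite_eq_right_iff.mpr fun hg => ?_
      obtain ⟨x, hx⟩ := not_forall.mp (mt mem_center_iff_commutatorElement.mpr hgZ)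
      have hxg : ⁅x, g⁆ ∈ Subgroup.center G := by
        rw [← commutatorElement_inv]
        exact inv_mem (hcomm g hg x)
      rw [character_eq_zero_of_commutator τ (center_le_charCenter τ hxg) fun hmem => hx ?_,
        zero_mul]
      rw [← commutatorElement_inv, hker _ hxg hmem, inv_one]
  rw [Finset.sum_congr rfl fun g _ => hterm g, ← Finset.sum_filter, Finset.sum_const,
    nsmul_eq_mul, ← Fintype.card_subtype, ← Nat.card_eq_fintype_card] at h
  exact_mod_cast h

theorem eq_of_dvd_of_sq_eq {p m n s j k : ℕ} (hp : p.Prime) (hm0 : m ≠ 0) (hn0 : n ≠ 0)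
    (hm : m ^ 2 = j * s) (hn : s * p ^ 2 = p * n ^ 2) (hj : j ∣ p ^ k) (hlt : j < p ^ 3) :
    m = n := by
  obtain ⟨i, -, rfl⟩ := (Nat.dvd_prime_pow hp).mp hj
  have hi : i < 3 := (Nat.pow_lt_pow_iff_right hp.one_lt).mp hlt
  have hn' : n ^ 2 = p * s := Nat.eq_of_mul_eq_mul_left hp.pos (by rw [← hn]; ring)
  interval_cases i
  · exact absurd (by rw [hm, hn', pow_zero, one_mul]) (prime_mul_sq_ne_sq (a := m) hp hn0)
  · exact Nat.pow_left_injective two_ne_zero (show m ^ 2 = n ^ 2 by rw [hm, hn', pow_one])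
  · exact absurd (by rw [hm, hn']; ring) (prime_mul_sq_ne_sq (a := n) hp hm0)

theorem degree_eq_of_not_commutator_le_center [Finite G] (hG : IsGCStar G) {p : ℕ}
    (hp : p.Prime) (hpG : IsPGroup p G) (hcard : Nat.card (commutator G) = p ^ 2)
    (hle : ¬ commutator G ≤ Subgroup.center G) {z : G} (hz : z ∈ Subgroup.center G)
    (hord : orderOf z = p) (hcomm : ∀ g ∈ commutator G, ∀ x, ⁅g, x⁆ ∈ Subgroup.zpowers z)
    (hpow : ∀ g x : G, ⁅g ^ p, x⁆ ∈ Subgroup.zpowers z) {m n : ℕ}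
    (ρ : Representation ℂ G (Fin m → ℂ)) [ρ.IsIrreducible] (hm : m ≠ 1)
    (hρ : z ∈ MonoidHom.ker ρ)
    (τ : Representation ℂ G (Fin n → ℂ)) [τ.IsIrreducible] (hn : n ≠ 1)
    (hτ : z ∉ MonoidHom.ker τ) : m = n := by
  have hdeg : ∀ (k : ℕ) (σ : Representation ℂ G (Fin k → ℂ)) [σ.IsIrreducible], k ≠ 0 := by
    rintro k σ hσ rfl
    have := ((isIrreducible_iff σ).mp hσ).1
    exact not_subsingleton (Fin 0 → ℂ) inferInstance
  have eq_zpowers : ∀ H : Subgroup G, z ∈ H → Nat.card H ∣ p → Subgroup.zpowers z = H := by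
    intro H hzH hdvd
    refine Subgroup.eq_of_le_of_card_ge (Subgroup.zpowers_le.mpr hzH) ?_
    rw [Nat.card_zpowers, hord]
    exact Nat.le_of_dvd hp.pos hdvd
  have hZle : Subgroup.center G ≤ commutator G :=
    (commutator_le_or_le_commutator hG (Subgroup.center G)).resolve_left hle
  have hZ : Subgroup.zpowers z = Subgroup.center G :=
    eq_zpowers _ hz (card_dvd_of_lt_of_card_eq_sq hp hZle hle hcard)
  have hZcard : Nat.card (Subgroup.center G) = p := by rw [← hZ, Nat.card_zpowers, hord]
  have hkerρ : Subgroup.zpowers z = MonoidHom.ker ρ :=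
    eq_zpowers _ hρ (card_dvd_of_lt_of_card_eq_sq hp (ker_le_commutator hG ρ hm)
      (not_commutator_le_ker ρ hm) hcard)
  have hcc : commutator G ≤ charCenter ρ := fun g hg x => hkerρ ▸ hcomm g hg x
  have hcc_eq : commutator G = charCenter ρ := by
    refine Subgroup.eq_of_le_of_card_ge hcc ?_
    have hpw : ∀ x ∈ MonoidHom.ker ρ, x ^ p = 1 := fun x hx => by
      rw [← hkerρ] at hx
      simpa [Nat.card_zpowers, hord] using pow_card_eq_one_of_mem hx
    rcases card_charCenter_eq ρ hp (hkerρ ▸ hZ.le) hpw with h | h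
    · rw [h, hZcard, hcard]
      exact Nat.le_self_pow two_ne_zero p
    · rw [h, hZcard, hcard, sq]
  have hexp : ∀ g : G, g ^ p ^ 3 = 1 := fun g => by
    have hg : g ^ p ∈ commutator G := by
      rw [hcc_eq]
      exact fun x => hkerρ ▸ hpow g x
    rw [pow_succ', pow_mul, ← hcard, pow_card_eq_one_of_mem hg]
  have hkerτ : ∀ y ∈ Subgroup.center G, y ∈ MonoidHom.ker τ → y = 1 := by
    intro y hy hyτ
    have hdvd : Nat.card (Subgroup.center G ⊓ MonoidHom.ker τ : Subgroup G) ∣ p :=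
      hZcard ▸ Subgroup.card_dvd_of_le inf_le_left
    rcases (Nat.dvd_prime hp).mp hdvd with h | h
    · have hmem : y ∈ Subgroup.center G ⊓ MonoidHom.ker τ := ⟨hy, hyτ⟩
      rwa [Subgroup.card_eq_one.mp h, Subgroup.mem_bot] at hmem
    · have heq := Subgroup.eq_of_le_of_card_ge
        (inf_le_left : Subgroup.center G ⊓ MonoidHom.ker τ ≤ _) (by rw [h, hZcard])
      exact absurd (heq.ge hz).2 hτ
  have hS := card_twistStabilizer_mul_card_commutator hZle (fun g hg x => hZ ▸ hcomm g hg x)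
    τ hkerτ
  rw [hcard, hZcard] at hS
  have hΛ : m ^ 2 = Nat.card (Abelianization G →* ℂˣ) := by
    have h := finrank_sq_mul_card_charCenter ρ hcc
    rw [← hcc_eq, ← card_linearChar (G := G), Module.finrank_fin_fun] at h
    exact Nat.eq_of_mul_eq_mul_right Nat.card_pos h
  have := Fact.mk hp
  obtain ⟨k, hk⟩ := IsPGroup.iff_card.mp hpG
  refine eq_of_dvd_of_sq_eq hp (hdeg m ρ) (hdeg n τ)
    (hΛ.trans (Subgroup.index_mul_card (twistStabilizer τ)).symm) hS (k := k) ?_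
    (index_twistStabilizer_lt hG τ hn (Nat.one_lt_pow three_ne_zero hp.one_lt) hexp)
  rw [← hk, ← card_linearChar]
  exact (Subgroup.index_dvd_card _).mul_right _

theorem card_commutator_ne_sq [Finite G] (hG : IsGCStar G) {p : ℕ}
    (hp : p.Prime) (hpG : IsPGroup p G) {z : G} (hz : z ∈ Subgroup.center G)
    (hord : orderOf z = p) (hzG : z ∈ commutator G)
    (hcomm : ∀ g ∈ commutator G, ∀ x, ⁅g, x⁆ ∈ Subgroup.zpowers z)
    (hpow : ∀ g x : G, ⁅g ^ p, x⁆ ∈ Subgroup.zpowers z) :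
    Nat.card (commutator G) ≠ p ^ 2 := by
  intro hcard
  have := normal_zpowers_of_mem_center hz
  have hN : ¬ commutator G ≤ Subgroup.zpowers z := fun h => by
    have hdvd := Subgroup.card_dvd_of_le h
    rw [Nat.card_zpowers, hord, hcard] at hdvd
    exact (lt_self_pow₀ hp.one_lt one_lt_two).not_ge (Nat.le_of_dvd hp.pos hdvd)
  obtain ⟨m, ρ, hρ, hm, hker⟩ := exists_isIrreducible_of_not_commutator_le _ hN
  have hz1 : z ≠ 1 := fun h => hp.one_lt.ne (by rw [← hord, h, orderOf_one])
  obtain ⟨n, τ, hτ, hne⟩ := exists_isIrreducible_apply_ne_one hz1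
  have hn : n ≠ 1 := degree_ne_one_of_not_commutator_le (ρ := τ) fun h => hne (h hzG)
  have hzρ : z ∈ MonoidHom.ker ρ := hker (Subgroup.mem_zpowers z)
  obtain rfl : m = n := by
    by_cases hle : commutator G ≤ Subgroup.center G
    · exact degree_eq_of_commutator_le_center hG hp hcard hle ρ hm τ hn
    · exact degree_eq_of_not_commutator_le_center hG hp hpG hcard hle hz hord hcomm hpow ρ hm hzρ
        τ hn hne
  exact hne (mem_ker_of_mem_ker hG ρ τ hm (center_le_charCenter τ hz) hzρ)

theorem card_commutator_eq_mul [Finite G] {N : Subgroup G} [N.Normal] (hN : N ≤ commutator G) :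
    Nat.card (commutator G) = Nat.card N * Nat.card (commutator (G ⧸ N)) := by
  have hmap : (commutator G).map (QuotientGroup.mk' N) = commutator (G ⧸ N) := by
    rw [commutator_def, Subgroup.map_commutator, commutator_def,
      Subgroup.map_top_of_surjective _ (QuotientGroup.mk'_surjective N)]
  have hcomap : (commutator (G ⧸ N)).comap (QuotientGroup.mk' N) = commutator G := by
    rw [← hmap, Subgroup.comap_map_eq_self (by rwa [QuotientGroup.ker_mk'])]
  have hindex : (commutator G).index = (commutator (G ⧸ N)).index := by
    rw [← hcomap, Subgroup.index_comap_of_surjective _ (QuotientGroup.mk'_surjective N)]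
  refine Nat.eq_of_mul_eq_mul_right (Nat.pos_of_ne_zero (commutator G).index_ne_zero_of_finite) ?_
  rw [Subgroup.card_mul_index, hindex, mul_assoc, Subgroup.card_mul_index,
    Subgroup.card_eq_card_quotient_mul_card_subgroup N, mul_comm]

/-- In a nilpotent group, a subgroup of prime order `p` inside the commutator subgroup
with a `q`-group as quotient forces `p = q`. -/
theorem eq_of_isPGroup_quotient [Finite G] [Group.IsNilpotent G] {p q : ℕ} (hp : p.Prime)
    (hq : q.Prime) {N : Subgroup G} [N.Normal] (hN : Nat.card N = p) (hle : N ≤ commutator G)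
    (hquot : IsPGroup q (G ⧸ N)) : p = q := by
  by_contra hne
  have := Fact.mk hp
  have := Fact.mk hq
  obtain ⟨k, hk⟩ := IsPGroup.iff_card.mp hquot
  have hG : Nat.card G = q ^ k * p := by
    rw [Subgroup.card_eq_card_quotient_mul_card_subgroup N, hk, hN]
  obtain ⟨P⟩ : Nonempty (Sylow q G) := inferInstance
  have hsylow : ∀ (r : ℕ) (_ : Fact r.Prime) (P : Sylow r G), (P : Subgroup G).Normal :=
    ((Group.isNilpotent_of_finite_tfae (G := G)).out 0 3).mp ‹_›
  have hnormal := hsylow q ‹_› P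
  have hdvd : Nat.card (G ⧸ (P : Subgroup G)) ∣ p := by
    refine Nat.Coprime.dvd_of_dvd_mul_left (m := q ^ k) ?_ (hG ▸ Subgroup.index_dvd_card _)
    exact Nat.Coprime.pow_right k ((Nat.Prime.coprime_iff_not_dvd hq).mpr P.not_dvd_index).symm
  have hcyc : IsCyclic (G ⧸ (P : Subgroup G)) := isCyclic_of_card_dvd_prime hdvd
  have hPle : commutator G ≤ P :=
    Subgroup.Normal.quotient_commutative_iff_commutator_le.mp inferInstance
  obtain ⟨i, hi⟩ := IsPGroup.iff_card.mp P.isPGroup'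
  have hpdvd : p ∣ q ^ i := hi ▸ hN ▸ Subgroup.card_dvd_of_le (hle.trans hPle)
  exact hne ((Nat.prime_dvd_prime_iff_eq hp hq).mp (hp.dvd_of_dvd_pow hpdvd))

theorem prime_card_commutator {G : Type*} [Group G] [Finite G] [Group.IsNilpotent G]
    (hG : IsGCStar G) (hne : commutator G ≠ ⊥) : (Nat.card (commutator G)).Prime := by
  induction hc : Nat.card G using Nat.strong_induction_on generalizing G with
  | _ c ih =>
  subst hc
  by_contra hnp
  have : Nontrivial G := by
    by_contra hG'
    rw [not_nontrivial_iff_subsingleton] at hG'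
    exact hne (Subsingleton.elim _ _)
  obtain ⟨z, hz, hord⟩ := exists_mem_center_orderOf_prime (G := G)
  have hnormal := normal_zpowers_of_mem_center hz
  have hNcard := Nat.card_zpowers z
  have hnle : ¬ commutator G ≤ Subgroup.zpowers z := fun h => by
    rcases (Nat.dvd_prime hord).mp (hNcard ▸ Subgroup.card_dvd_of_le h) with h1 | h1
    · exact hne (Subgroup.card_eq_one.mp h1)
    · exact hnp (h1 ▸ hord)
  have hle := (commutator_le_or_le_commutator hG (Subgroup.zpowers z)).resolve_left hnle
  have hmul := card_commutator_eq_mul hle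
  have hGQ := isGCStar_quotient hG (Subgroup.zpowers z)
  have hneQ : commutator (G ⧸ Subgroup.zpowers z) ≠ ⊥ := fun h => by
    rw [h, Subgroup.card_bot, mul_one, hNcard] at hmul
    exact hnp (hmul ▸ hord)
  have hlt : Nat.card (G ⧸ Subgroup.zpowers z) < Nat.card G := by
    rw [Subgroup.card_eq_card_quotient_mul_card_subgroup (Subgroup.zpowers z), hNcard]
    exact lt_mul_of_one_lt_right Nat.card_pos hord.one_lt
  have hq := ih _ hlt hGQ hneQ rfl
  obtain ⟨hpQ, -, hcenter⟩ := isPGroup_of_prime_card_commutator hGQ hq rfl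
  have hpq := eq_of_isPGroup_quotient hord hq hNcard hle hpQ
  rw [← hpq] at hpQ
  have hpG : IsPGroup (orderOf z) G := by
    have := Fact.mk hord
    obtain ⟨k, hk⟩ := IsPGroup.iff_card.mp hpQ
    refine IsPGroup.of_card (n := k + 1) ?_
    rw [Subgroup.card_eq_card_quotient_mul_card_subgroup (Subgroup.zpowers z), hNcard, hk, pow_succ]
  have hmem : ∀ g x : G, (g : G ⧸ Subgroup.zpowers z) ∈ Subgroup.center (G ⧸ Subgroup.zpowers z) →
      ⁅g, x⁆ ∈ Subgroup.zpowers z := fun g x hg =>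
    (QuotientGroup.eq_one_iff _).mp (mem_center_iff_commutatorElement.mp hg x)
  refine card_commutator_ne_sq hG hord hpG hz rfl (hle (Subgroup.mem_zpowers z))
    (fun g hg x => hmem g x (hcenter ?_)) (fun g x => hmem _ x ?_) ?_
  · have h := Subgroup.mem_map_of_mem (QuotientGroup.mk' (Subgroup.zpowers z)) hg
    rw [commutator_def, Subgroup.map_commutator] at h
    exact Subgroup.commutator_mono le_top le_top h
  · exact pow_mem_center hpq.symm hcenter (g : G ⧸ Subgroup.zpowers z)
  · rw [hmul, ← hpq, hNcard, sq]

end Classification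

end GCStar

/-- A finite nilpotent `GC*`-group is abelian, or a group of prime power order with cyclic
center and commutator subgroup of prime order. -/
theorem nilpotent_gcstar {G : Type*} [Group G] [Finite G]
    (hnil : Group.IsNilpotent G) (h : IsGCStar G) :
    (∀ a b : G, a * b = b * a) ∨
    (∃ p : ℕ, p.Prime ∧ IsPGroup p G ∧ IsCyclic (Subgroup.center G) ∧
      (Nat.card (commutator G)).Prime) := by
  refine or_iff_not_imp_left.mpr fun hab => ?_
  have hp := GCStar.prime_card_commutator h (GCStar.commutator_ne_bot hab)
  obtain ⟨hpG, hcyc, -⟩ := GCStar.isPGroup_of_prime_card_commutator h hp rfl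
  exact ⟨_, hp, hpG, hcyc, hp⟩
end
end
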